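/- arXiv:2507.16435 — 3 statements merged into one kernel-verified Lean document; each statement's English description precedes it below -/
import Mathlib

section
/- Let k be a differential field of characteristic zero whose field of constants C is algebraically closed, let E be a Picard–Vessiot extension of k for a monic linear differential operator L over k, and let d be a positive integer. Let V be the set of all solutions y ∈ E of L(y) = 0 such that k⟨y⟩ is a d-solvable extension of k. Then V is a C-subspace of E, and σ(V) = V for every automorphism σ of the field E that fixes k pointwise and commutes with the derivation. -/
universe u

/-- A bundled differential field of characteristic zero: a field together with a derivation,
given as a raw function satisfying additivity and the Leibniz rule. -/
structure DFld : Type (u + 1) where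
  carrier : Type u
  [fieldInst : Field carrier]
  [charZeroInst : CharZero carrier]
  deriv : carrier → carrier
  deriv_add : ∀ a b, deriv (a + b) = deriv a + deriv b
  deriv_mul : ∀ a b, deriv (a * b) = deriv a * b + a * deriv b

attribute [instance] DFld.fieldInst DFld.charZeroInst

/-- The result of applying the monic linear differential operator
`∂^n + a_{n-1} ∂^{n-1} + ⋯ + a_1 ∂ + a_0` (with coefficients `a`) to `y`,
where the derivation is given by `D`. -/
def LApply {E : Type u} [Field E] (D : E → E) (n : ℕ) (a : Fin n → E) (y : E) : E :=
  D^[n] y + ∑ i : Fin n, a i * D^[(i : ℕ)] y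

/-- `diffGen D k S` is the smallest differential subfield (w.r.t. the derivation `D`)
containing the subfield `k` and the set `S`; i.e. the differential field `k⟨S⟩`. -/
def diffGen {E : Type u} [Field E] (D : E → E) (k : Subfield E) (S : Set E) : Subfield E :=
  sInf {F : Subfield E | k ≤ F ∧ S ⊆ ↑F ∧ ∀ x ∈ F, D x ∈ F}

/-- The subfield of constants of a differential subfield `k`: `{x ∈ k | D x = 0}`. -/
def constantsOf {E : Type u} [Field E] (D : Derivation ℤ E E) (k : Subfield E) : Subfield E where
  carrier := {x | x ∈ k ∧ D x = 0}
  zero_mem' := ⟨k.zero_mem, map_zero D⟩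
  one_mem' := ⟨k.one_mem, D.map_one_eq_zero⟩
  add_mem' := by
    rintro a b ⟨hak, ha0⟩ ⟨hbk, hb0⟩
    exact ⟨k.add_mem hak hbk, by rw [map_add, ha0, hb0, add_zero]⟩
  neg_mem' := by
    rintro a ⟨hak, ha0⟩
    exact ⟨k.neg_mem hak, by rw [map_neg, ha0, neg_zero]⟩
  mul_mem' := by
    rintro a b ⟨hak, ha0⟩ ⟨hbk, hb0⟩
    exact ⟨k.mul_mem hak hbk, by
      rw [Derivation.leibniz, ha0, hb0, smul_zero, smul_zero, add_zero]⟩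
  inv_mem' := by
    rintro x ⟨hxk, hx0⟩
    refine ⟨k.inv_mem hxk, ?_⟩
    by_cases h : x = 0
    · simp [h]
    · have h1 : D (x * x⁻¹) = 0 := by rw [mul_inv_cancel₀ h, D.map_one_eq_zero]
      rw [Derivation.leibniz, hx0, smul_zero, add_zero, smul_eq_mul] at h1
      exact (mul_eq_zero.mp h1).resolve_left h

/-- `F` is a Picard–Vessiot extension of `k` (inside a common differential field) for the
monic linear differential operator of order `n` with (lower-order) coefficients `a`:
both are differential subfields, the constants of `F` equal the constants of `k`,
the coefficients lie in `k`, and `F` is differentially generated over `k` by an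
`n`-dimensional vector space (over the constants) of solutions. -/
def IsPVWith {E : Type u} [Field E] (D : E → E) (k F : Subfield E) (n : ℕ)
    (a : Fin n → E) : Prop :=
  k ≤ F ∧ (∀ x ∈ k, D x ∈ k) ∧ (∀ x ∈ F, D x ∈ F) ∧
  (∀ x ∈ F, D x = 0 → x ∈ k) ∧
  (∀ i, a i ∈ k) ∧
  ∃ y : Fin n → E,
    (∀ i, y i ∈ F) ∧
    (∀ i, LApply D n a (y i) = 0) ∧
    (∀ c : Fin n → E, (∀ i, c i ∈ k ∧ D (c i) = 0) → (∑ i, c i * y i) = 0 → ∀ i, c i = 0) ∧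
    diffGen D k (Set.range y) = F

/-- `F` is a Picard–Vessiot extension of `k` for some monic linear differential operator. -/
def IsPV {E : Type u} [Field E] (D : E → E) (k F : Subfield E) : Prop :=
  ∃ (n : ℕ) (a : Fin n → E), IsPVWith D k F n a

/-- Relative version: the differential subfield `F` is a Picard–Vessiot extension
of the differential subfield `kb ≤ F`. -/
def IsPVRel {E : Type u} [Field E] (D : E → E) (kb F : Subfield E)
    (hF : ∀ x ∈ F, D x ∈ F) : Prop :=
  IsPV (fun x : ↥F => (⟨D ↑x, hF ↑x x.2⟩ : ↥F)) (Subfield.comap F.subtype kb) ⊤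

/-- The ambient differential field (with derivation `D`) is a strongly normal extension of
its differential subfield `k`: it is finitely generated as a field extension of `k`, has no
new constants, and every differential embedding over `k` into a differential field extension
`M` lands in the compositum of the image of the base copy with the constants of `M`. -/
def IsSN {E : Type u} [Field E] (D : E → E) (k : Subfield E) : Prop :=
  (∀ x ∈ k, D x ∈ k) ∧
  (∃ s : Finset E, Subfield.closure (↑k ∪ ↑s) = (⊤ : Subfield E)) ∧
  (∀ x : E, D x = 0 → x ∈ k) ∧
  ∀ (M : DFld.{u}) (ι σ : E →+* M.carrier),
    (∀ x, ι (D x) = M.deriv (ι x)) →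
    (∀ x, σ (D x) = M.deriv (σ x)) →
    (∀ x ∈ k, σ x = ι x) →
    ∀ e : E, σ e ∈ Subfield.closure (Set.range ι ∪ {m : M.carrier | M.deriv m = 0})

/-- Relative version: the differential subfield `F` is a strongly normal extension of the
differential subfield `kb ≤ F`. -/
def IsSNRel {E : Type u} [Field E] (D : E → E) (kb F : Subfield E)
    (hF : ∀ x ∈ F, D x ∈ F) : Prop :=
  IsSN (fun x : ↥F => (⟨D ↑x, hF ↑x x.2⟩ : ↥F)) (Subfield.comap F.subtype kb)

/-- `K` is a finite field extension of the subfield `M`. -/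
def FinExt {E : Type u} [Field E] (M K : Subfield E) : Prop :=
  ∃ h : M ≤ K,
    letI : Algebra ↥M ↥K := (Subfield.inclusion h).toAlgebra
    Module.Finite ↥M ↥K

/-- The transcendence degree of the subfield `K` over the subfield `k`, as the supremum of the
cardinalities of subsets of `K` that are algebraically independent over `k`. -/
noncomputable def trdegOf {E : Type u} [Field E] (k K : Subfield E) : Cardinal.{u} :=
  ⨆ s : {s : Set E // s ⊆ (K : Set E) ∧ AlgebraicIndependent ↥k (fun x : ↥s => (x : E))},
    Cardinal.mk ↥(s.1)

/-- `K` and `M` are free over `k`: every finite subset of `K` that is algebraically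
independent over `k` remains algebraically independent over `M`. -/
def FreeOver {E : Type u} [Field E] (k K M : Subfield E) : Prop :=
  ∀ s : Finset E, (↑s : Set E) ⊆ (K : Set E) →
    AlgebraicIndependent ↥k (fun x : ↥(↑s : Set E) => (x : E)) →
    AlgebraicIndependent ↥M (fun x : ↥(↑s : Set E) => (x : E))

/-- `K` is a `k`-irreducible differential field: it is a finitely generated differential field
extension of `k` of transcendence degree at least 1, and every intermediate differential field
`k ⊂ M ⊆ K` has transcendence degree `0` or `trdeg(K|k)` over `k`. -/
def IsIrred {E : Type u} [Field E] (D : E → E) (k K : Subfield E) : Prop :=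
  (∃ s : Finset E, diffGen D k ↑s = K) ∧
  1 ≤ trdegOf k K ∧
  ∀ M : Subfield E, (∀ x ∈ M, D x ∈ M) → k < M → M ≤ K →
    trdegOf k M = 0 ∨ trdegOf k M = trdegOf k K

/-- `Kf` is a `d`-solvable extension of `k`: there is a tower of differential fields starting
at (a copy of) `k`, each step being a finite algebraic extension or a Picard–Vessiot extension
for an operator of order at most `d`, whose top contains (the copy of) `Kf`. -/
def IsDSolvable {E : Type u} [Field E] (D : E → E) (k Kf : Subfield E) (d : ℕ) : Prop :=
  ∃ (Ω : DFld.{u}) (j : E →+* Ω.carrier),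
    (∀ x, j (D x) = Ω.deriv (j x)) ∧
    ∃ (r : ℕ) (T : Fin (r + 1) → Subfield Ω.carrier),
      T 0 = Subfield.map j k ∧
      Subfield.map j Kf ≤ T (Fin.last r) ∧
      (∀ i, ∀ x ∈ T i, Ω.deriv x ∈ T i) ∧
      ∀ i : Fin r,
        FinExt (T i.castSucc) (T i.succ) ∨
        ∃ n ≤ d, ∃ a : Fin n → Ω.carrier, IsPVWith Ω.deriv (T i.castSucc) (T i.succ) n a

/-- `Kn` is generated over `kb`, as a differential field with the same constants, by one
solution `z` of an inhomogeneous equation `L(y) = b` (with `L` monic over `kb` of order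
`n ≤ d` and `b ∈ kb`) together with an `n`-dimensional space (over the constants) of
solutions of `L(y) = 0`. -/
def IsPVInhomLe {E : Type u} [Field E] (D : E → E) (kb Kn : Subfield E) (d : ℕ) : Prop :=
  kb ≤ Kn ∧ (∀ x ∈ kb, D x ∈ kb) ∧ (∀ x ∈ Kn, D x ∈ Kn) ∧
  (∀ x ∈ Kn, D x = 0 → x ∈ kb) ∧
  ∃ n, n ≤ d ∧ ∃ (a : Fin n → E) (b z : E) (y : Fin n → E),
    (∀ i, a i ∈ kb) ∧ b ∈ kb ∧ z ∈ Kn ∧ (∀ i, y i ∈ Kn) ∧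
    LApply D n a z = b ∧
    (∀ i, LApply D n a (y i) = 0) ∧
    (∀ c : Fin n → E, (∀ i, c i ∈ kb ∧ D (c i) = 0) → (∑ i, c i * y i) = 0 → ∀ i, c i = 0) ∧
    diffGen D kb (insert z (Set.range y)) = Kn

/-- `Kf` is a `d⁺`-solvable extension of `k`. -/
def IsDPlusSolvable {E : Type u} [Field E] (D : E → E) (k Kf : Subfield E) (d : ℕ) : Prop :=
  ∃ (Ω : DFld.{u}) (j : E →+* Ω.carrier),
    (∀ x, j (D x) = Ω.deriv (j x)) ∧
    ∃ (r : ℕ) (T : Fin (r + 1) → Subfield Ω.carrier),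
      T 0 = Subfield.map j k ∧
      Subfield.map j Kf ≤ T (Fin.last r) ∧
      (∀ i, ∀ x ∈ T i, Ω.deriv x ∈ T i) ∧
      ∀ i : Fin r,
        FinExt (T i.castSucc) (T i.succ) ∨ IsPVInhomLe Ω.deriv (T i.castSucc) (T i.succ) d

/-- `TSet D kb K` is the set of elements of `K` annihilated by some monic linear differential
operator with coefficients in `kb`. -/
def TSet {E : Type u} [Field E] (D : E → E) (kb K : Subfield E) : Set E :=
  {x | x ∈ K ∧ ∃ (n : ℕ) (a : Fin n → E), (∀ i, a i ∈ kb) ∧ LApply D n a x = 0}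

/-!
Scalar multiples and automorphisms transport `d`-solvable towers; the content is that `k⟨u⟩k⟨v⟩` is
`d`-solvable when `k⟨u⟩` and `k⟨v⟩` are. Their towers live in unrelated fields, and a Picard–Vessiot
step stays one after base change only if no new constants appear. So both towers must be embedded in
one extension of `E` with the same constants. Every finite or Picard–Vessiot step `M ⊆ L` is the
fraction field of a finitely generated differentially simple `M`-algebra `P`. Over any `K ⊇ M` with
algebraically closed constants, a simple quotient `B` of `K ⊗[M] P` has a fraction field without new
constants, and `P` embeds in it because `P` is simple. Amalgamating step by step along each tower
gives the common extension, in which the tower of `v` is joined with the top of the tower of `u`.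
-/

namespace PicardVessiot

open Polynomial
open scoped Differential TensorProduct

section DifferentialHom

variable {R S T : Type*} [CommRing R] [Differential R] [CommRing S] [Differential S]
  [CommRing T] [Differential T]

/-- A ring homomorphism which commutes with the derivations. -/
def IsDiffHom (f : R →+* S) : Prop :=
  ∀ x, f x′ = (f x)′

/-- An ideal which is stable under the derivation. -/
def IsDifferentialIdeal (I : Ideal R) : Prop :=
  ∀ x ∈ I, x′ ∈ I

lemma IsDiffHom.comp {g : S →+* T} {f : R →+* S} (hg : IsDiffHom g) (hf : IsDiffHom f) :
    IsDiffHom (g.comp f) := fun x ↦ by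
  rw [RingHom.comp_apply, hf, hg, RingHom.comp_apply]

lemma isDiffHom_algebraMap [Algebra R S] [DifferentialAlgebra R S] :
    IsDiffHom (algebraMap R S) := fun x ↦ (deriv_algebraMap x).symm

lemma IsDifferentialIdeal.comap {f : R →+* S} (hf : IsDiffHom f) {J : Ideal S}
    (hJ : IsDifferentialIdeal J) : IsDifferentialIdeal (J.comap f) := fun x hx ↦ by
  rw [Ideal.mem_comap, hf]
  exact hJ _ hx

lemma isDifferentialIdeal_bot : IsDifferentialIdeal (⊥ : Ideal R) := fun x hx ↦ by
  rw [Ideal.mem_bot] at hx ⊢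
  rw [hx, map_zero]

lemma IsDiffHom.isDifferentialIdeal_ker {f : R →+* S} (hf : IsDiffHom f) :
    IsDifferentialIdeal (RingHom.ker f) :=
  isDifferentialIdeal_bot.comap hf

end DifferentialHom

section Simple

variable {R S : Type*} [CommRing R] [Differential R] [CommRing S] [Differential S]

/-- A differentially simple ring: a nontrivial differential ring whose only differential ideals
are `⊥` and `⊤`. -/
class IsDiffSimple (R : Type*) [CommRing R] [Differential R] : Prop extends Nontrivial R where
  eq_bot_or_eq_top (I : Ideal R) : IsDifferentialIdeal I → I = ⊥ ∨ I = ⊤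

instance {L : Type*} [Field L] [Differential L] : IsDiffSimple L where
  eq_bot_or_eq_top I _ := eq_bot_or_eq_top I

namespace IsDiffSimple

lemma eq_bot [IsDiffSimple R] {I : Ideal R} (hI : IsDifferentialIdeal I) (h1 : (1 : R) ∉ I) :
    I = ⊥ :=
  (eq_bot_or_eq_top I hI).resolve_right fun h ↦ h1 (h ▸ Submodule.mem_top)

lemma isUnit_of_deriv_eq_zero [IsDiffSimple R] {c : R} (hc : c′ = 0) (hc0 : c ≠ 0) :
    IsUnit c := by
  rw [← Ideal.span_singleton_eq_top]
  refine (eq_bot_or_eq_top (Ideal.span {c}) fun x hx ↦ ?_).resolve_left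
    (mt Ideal.span_singleton_eq_bot.mp hc0)
  obtain ⟨y, rfl⟩ := Ideal.mem_span_singleton'.mp hx
  exact Ideal.mem_span_singleton'.mpr ⟨y′, by simp [hc, mul_comm]⟩

lemma injective [IsDiffSimple R] [Nontrivial S] {f : R →+* S} (hf : IsDiffHom f) :
    Function.Injective f := by
  rw [RingHom.injective_iff_ker_eq_bot]
  exact eq_bot hf.isDifferentialIdeal_ker (by simp [RingHom.mem_ker])

lemma of_surjective [IsDiffSimple R] [Nontrivial S] {f : R →+* S} (hf : IsDiffHom f)
    (hsurj : Function.Surjective f) : IsDiffSimple S where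
  eq_bot_or_eq_top J hJ := by
    rw [← Ideal.map_comap_of_surjective f hsurj J]
    refine (eq_bot_or_eq_top _ (hJ.comap hf)).imp (fun h ↦ ?_) fun h ↦ ?_
    · rw [h, Ideal.map_bot]
    · rw [h, Ideal.map_top]

/-- The ideal of elements annihilated by a power of `a`. -/
def powAnnihilator (a : R) : Ideal R where
  carrier := {b | ∃ n : ℕ, a ^ n * b = 0}
  zero_mem' := ⟨0, mul_zero _⟩
  add_mem' := by
    rintro x y ⟨n, hn⟩ ⟨m, hm⟩
    exact ⟨n + m, by linear_combination a ^ m * hn + a ^ n * hm⟩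
  smul_mem' := by
    rintro c x ⟨n, hn⟩
    exact ⟨n, by rw [smul_eq_mul, mul_left_comm, hn, mul_zero]⟩

lemma isDifferentialIdeal_powAnnihilator (a : R) :
    IsDifferentialIdeal (powAnnihilator a) := by
  rintro x ⟨n, hn⟩
  refine ⟨n + 1, ?_⟩
  have hpow : a * (a ^ n)′ = n * (a ^ n * a′) := by
    cases n with
    | zero => simp
    | succ n =>
      simp only [Derivation.leibniz_pow, nsmul_eq_mul, smul_eq_mul, n.add_sub_cancel]
      ring
  have hderiv : a ^ n * x′ + x * (a ^ n)′ = 0 := by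
    rw [← smul_eq_mul, ← smul_eq_mul x, ← Derivation.leibniz, hn, map_zero]
  linear_combination a * hderiv - x * hpow - n * a′ * hn

lemma mul_eq_zero_of_not_isNilpotent [IsDiffSimple R] {a b : R} (ha : ¬ IsNilpotent a)
    (hab : a * b = 0) : b = 0 := by
  have hbot : powAnnihilator a = ⊥ := eq_bot (isDifferentialIdeal_powAnnihilator a)
    fun ⟨n, hn⟩ ↦ ha ⟨n, by simpa using hn⟩
  have hb : b ∈ powAnnihilator a := ⟨1, by simpa using hab⟩
  simpa [hbot] using hb

lemma isDifferentialIdeal_nilradical [IsDiffSimple R] [CharZero R] :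
    IsDifferentialIdeal (nilradical R) := by
  rintro a ⟨n, hn⟩
  by_contra ha'
  induction n with
  | zero => exact one_ne_zero ((pow_zero a).symm.trans hn)
  | succ n ih =>
    refine ih ?_
    have hunit : IsUnit ((n + 1 : ℕ) : R) :=
      isUnit_of_deriv_eq_zero (Derivation.map_natCast _ _) (Nat.cast_ne_zero.mpr n.succ_ne_zero)
    have hderiv : (a ^ (n + 1))′ = 0 := by rw [hn, map_zero]
    rw [Derivation.leibniz_pow, n.add_sub_cancel, nsmul_eq_mul, hunit.mul_right_eq_zero,
      smul_eq_mul, mul_comm] at hderiv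
    exact mul_eq_zero_of_not_isNilpotent ha' hderiv

instance (priority := low) isDomain [IsDiffSimple R] [CharZero R] : IsDomain R := by
  have hnil : nilradical R = ⊥ := eq_bot isDifferentialIdeal_nilradical not_isNilpotent_one
  have : NoZeroDivisors R :=
    ⟨fun {a b} hab ↦ or_iff_not_imp_left.mpr fun ha ↦ mul_eq_zero_of_not_isNilpotent
      (fun h ↦ ha (by simpa [hnil] using mem_nilradical.mpr h)) hab⟩
  exact NoZeroDivisors.to_isDomain R

end IsDiffSimple

section SimpleQuotient

variable (R)

lemma exists_maximal_isDifferentialIdeal [Nontrivial R] :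
    ∃ I : Ideal R, Maximal (fun J ↦ IsDifferentialIdeal J ∧ (1 : R) ∉ J) I := by
  have hsSup : ∀ c ⊆ {J : Ideal R | IsDifferentialIdeal J ∧ (1 : R) ∉ J},
      IsChain (· ≤ ·) c → ∀ J ∈ c, IsDifferentialIdeal (sSup c) ∧ (1 : R) ∉ sSup c := by
    intro c hc hchain J hJ
    have hmem {x : R} : x ∈ sSup c ↔ ∃ I ∈ c, x ∈ I :=
      Submodule.mem_sSup_of_directed ⟨J, hJ⟩ hchain.directedOn
    refine ⟨fun x hx ↦ ?_, fun h1 ↦ ?_⟩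
    · obtain ⟨I, hI, hxI⟩ := hmem.mp hx
      exact hmem.mpr ⟨I, hI, (hc hI).1 x hxI⟩
    · obtain ⟨I, hI, h1I⟩ := hmem.mp h1
      exact (hc hI).2 h1I
  obtain ⟨I, -, hI⟩ := zorn_le_nonempty₀ _
    (fun c hc hchain J hJ ↦ ⟨sSup c, hsSup c hc hchain J hJ, fun I hI ↦ le_sSup hI⟩)
    ⊥ ⟨isDifferentialIdeal_bot, by simp⟩
  exact ⟨I, hI⟩

variable [Nontrivial R]

/-- A maximal proper differential ideal of `R`, fixed by choice. -/
noncomputable def maxDiffIdeal : Ideal R :=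
  (exists_maximal_isDifferentialIdeal R).choose

/-- The quotient of `R` by a maximal differential ideal, a differentially simple ring. -/
abbrev SimpleQuotient : Type _ :=
  R ⧸ maxDiffIdeal R

namespace SimpleQuotient

lemma maximal_maxDiffIdeal :
    Maximal (fun J ↦ IsDifferentialIdeal J ∧ (1 : R) ∉ J) (maxDiffIdeal R) :=
  (exists_maximal_isDifferentialIdeal R).choose_spec

noncomputable instance : Differential (SimpleQuotient R) where
  deriv := Derivation.liftOfSurjective (d := Differential.deriv)
    (f := (Ideal.Quotient.mk (maxDiffIdeal R)).toIntAlgHom) Ideal.Quotient.mk_surjective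
    fun x hx ↦ Ideal.Quotient.eq_zero_iff_mem.mpr
      ((maximal_maxDiffIdeal R).prop.1 x (Ideal.Quotient.eq_zero_iff_mem.mp hx))

lemma isDiffHom_mk : IsDiffHom (Ideal.Quotient.mk (maxDiffIdeal R)) := fun x ↦
  (Derivation.liftOfSurjective_apply (f := (Ideal.Quotient.mk (maxDiffIdeal R)).toIntAlgHom) _ _
    x).symm

instance : IsDiffSimple (SimpleQuotient R) where
  exists_pair_ne := (Ideal.Quotient.nontrivial_iff.mpr ((Ideal.ne_top_iff_one _).mpr
    (maximal_maxDiffIdeal R).prop.2)).exists_pair_ne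
  eq_bot_or_eq_top J hJ := by
    refine or_iff_not_imp_right.mpr fun htop ↦ ?_
    have hle : maxDiffIdeal R ≤ J.comap (Ideal.Quotient.mk _) :=
      Ideal.mk_ker.symm.trans_le (Ideal.comap_mono bot_le)
    have hcomap : J.comap (Ideal.Quotient.mk _) = maxDiffIdeal R :=
      ((maximal_maxDiffIdeal R).eq_of_le ⟨hJ.comap (isDiffHom_mk R),
        fun h ↦ htop ((Ideal.eq_top_iff_one J).mpr (by simpa using h))⟩ hle).symm
    rw [← Ideal.map_comap_of_surjective _ Ideal.Quotient.mk_surjective J, hcomap,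
      Ideal.map_quotient_self]

instance {A : Type*} [CommRing A] [Differential A] [Algebra A R] [DifferentialAlgebra A R] :
    DifferentialAlgebra A (SimpleQuotient R) where
  deriv_algebraMap a := by
    rw [IsScalarTower.algebraMap_apply A R (SimpleQuotient R) a′, ← deriv_algebraMap a,
      IsScalarTower.algebraMap_apply A R (SimpleQuotient R) a]
    exact (isDiffHom_mk R _).symm

end SimpleQuotient

end SimpleQuotient

end Simple

section Constants

/-- The field of constants of a differential field. -/
abbrev constants (K : Type*) [Field K] [Differential K] : Subfield K :=
  constantsOf Differential.deriv ⊤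

lemma mem_constants {K : Type*} [Field K] [Differential K] {x : K} :
    x ∈ constants K ↔ x′ = 0 :=
  and_iff_right (Subfield.mem_top x)

lemma degree_mapCoeffs_lt {R : Type*} [CommRing R] [Nontrivial R] [Differential R] {p : R[X]}
    (hp : p.Monic) : (Differential.mapCoeffs p).degree < p.degree := by
  rw [degree_eq_natDegree hp.ne_zero, degree_lt_iff_coeff_zero]
  intro i hi
  rw [Differential.coeff_mapCoeffs]
  obtain rfl | hlt := hi.eq_or_lt
  · rw [coeff_natDegree, hp.leadingCoeff, Derivation.map_one_eq_zero]
  · rw [coeff_eq_zero_of_natDegree_lt hlt, map_zero]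

variable {K B : Type*} [Field K] [CommRing B] [Algebra K B]

lemma mapCoeffs_minpoly_eq_zero [Differential K] [Differential B] [DifferentialAlgebra K B]
    {b : B} (hb : b′ = 0) (hint : IsIntegral K b) :
    Differential.mapCoeffs (minpoly K b) = 0 := by
  by_contra hne
  refine (minpoly.degree_le_of_ne_zero K b hne ?_).not_gt (degree_mapCoeffs_lt (minpoly.monic hint))
  have hderiv := Differential.deriv_aeval_eq b (minpoly K b)
  rwa [minpoly.aeval, map_zero, hb, mul_zero, add_zero, eq_comm] at hderiv

variable [IsDomain B]

lemma mem_range_algebraMap_of_isIntegral [Differential K] [Differential B]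
    [DifferentialAlgebra K B] [IsAlgClosed (constants K)] {b : B} (hb : b′ = 0)
    (hint : IsIntegral K b) : b ∈ (algebraMap K B).range := by
  have hcoeff (i : ℕ) : (minpoly K b).coeff i ∈ constants K := by
    rw [mem_constants, ← Differential.coeff_mapCoeffs, mapCoeffs_minpoly_eq_zero hb hint,
      coeff_zero]
  have hlift : minpoly K b ∈ lifts (constants K).subtype :=
    (lifts_iff_coeff_lifts _).mpr fun i ↦ ⟨⟨_, hcoeff i⟩, rfl⟩
  obtain ⟨q, hq⟩ := (mem_lifts _).mp hlift
  have hsplits : (minpoly K b).Splits := hq ▸ (IsAlgClosed.splits q).map _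
  exact minpoly.mem_range_of_degree_eq_one K b
    (hsplits.degree_eq_one_of_irreducible (minpoly.irreducible hint))

-- `B` is flat over `K[b]`, so `Spec B → Spec K[b]` has open image, and this image contains the
-- generic point: it misses only finitely many of the points `b = s`.
lemma exists_not_isUnit_sub_algebraMap [Algebra.FiniteType K B] {b : B} (hb : ¬ IsIntegral K b)
    {S : Set K} (hS : S.Infinite) : ∃ s ∈ S, ¬ IsUnit (b - algebraMap K B s) := by
  let _ : Algebra K[X] B := (aeval b).toAlgebra
  have : IsScalarTower K K[X] B := .of_algebraMap_eq fun x ↦ (aeval_C b x).symm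
  have hinj : Function.Injective (algebraMap K[X] B) :=
    transcendental_iff_injective.mp fun h ↦ hb h.isIntegral
  have : FaithfulSMul K[X] B := (faithfulSMul_iff_algebraMap_injective _ _).mpr hinj
  have : Algebra.FiniteType K[X] B := .of_restrictScalars_finiteType K K[X] B
  have : Algebra.FinitePresentation K[X] B :=
    Algebra.FinitePresentation.of_finiteType.mp inferInstance
  have hopen : IsOpen (Set.range (PrimeSpectrum.comap (algebraMap K[X] B))) :=
    PrimeSpectrum.isOpenMap_comap_of_hasGoingDown_of_finitePresentation.isOpen_range
  have hgeneric : ⊥ ∈ Set.range (PrimeSpectrum.comap (algebraMap K[X] B)) :=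
    ⟨⊥, PrimeSpectrum.ext (Ideal.comap_bot_of_injective _ hinj)⟩
  obtain ⟨_, ⟨_, ⟨f, rfl⟩, rfl⟩, hf, hsub⟩ :=
    PrimeSpectrum.isBasis_basic_opens.exists_subset_of_mem_open hgeneric hopen
  have hf0 : f ≠ 0 := fun h ↦ hf (h ▸ Submodule.zero_mem _)
  obtain ⟨s, hs, hroot⟩ := hS.exists_notMem_finite (finite_setOfPred_isRoot hf0)
  have hprime : (Ideal.span {X - C s}).IsPrime :=
    (Ideal.span_singleton_prime (X_sub_C_ne_zero s)).mpr (prime_X_sub_C s)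
  obtain ⟨Q, hQ⟩ := @hsub ⟨_, hprime⟩ fun h ↦
    hroot (dvd_iff_isRoot.mp (Ideal.mem_span_singleton.mp h))
  have hmem : aeval b (X - C s) ∈ Q.asIdeal := by
    have h : X - C s ∈ (PrimeSpectrum.comap (algebraMap K[X] B) Q).asIdeal :=
      hQ ▸ Ideal.mem_span_singleton_self _
    exact h
  rw [map_sub, aeval_X, aeval_C] at hmem
  exact ⟨s, hs, fun hu ↦ Q.isPrime.ne_top (Ideal.eq_top_of_isUnit_mem _ hmem hu)⟩

lemma containConstants_of_isDiffSimple (K B : Type*) [Field K] [CharZero K] [Differential K]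
    [CommRing B] [Differential B] [Algebra K B] [DifferentialAlgebra K B]
    [Algebra.FiniteType K B] [IsDiffSimple B] [IsAlgClosed (constants K)] :
    Differential.ContainConstants K B where
  mem_range_of_deriv_eq_zero {b} hb := by
    have : CharZero B := charZero_of_injective_algebraMap (algebraMap K B).injective
    by_contra hrange
    have hint : ¬ IsIntegral K b := fun h ↦ hrange (mem_range_algebraMap_of_isIntegral hb h)
    have hinf : (constants K : Set K).Infinite :=
      Set.infinite_of_injective_forall_mem Nat.cast_injective fun n : ℕ ↦ natCast_mem _ n
    obtain ⟨s, hs, hunit⟩ := exists_not_isUnit_sub_algebraMap hint hinf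
    refine hunit (IsDiffSimple.isUnit_of_deriv_eq_zero ?_ fun h ↦
      hrange ⟨s, (sub_eq_zero.mp h).symm⟩)
    rw [map_sub, hb, deriv_algebraMap, mem_constants.mp hs, map_zero, sub_zero]

end Constants

section TensorProduct

variable {M A B : Type*} [CommRing M] [CommRing A] [CommRing B] [Algebra M A] [Algebra M B]
  [Differential M] [Differential A] [Differential B] [DifferentialAlgebra M A]
  [DifferentialAlgebra M B]

variable (M A B) in
/-- The additive map `a ⊗ b ↦ a′ ⊗ b + a ⊗ b′` on `A ⊗[M] B`; it is not `M`-linear. -/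
noncomputable def tensorDeriv : A ⊗[M] B →+ A ⊗[M] B :=
  TensorProduct.liftAddHom
    (AddMonoidHom.mk' (fun a ↦ AddMonoidHom.mk' (fun b ↦ a′ ⊗ₜ b + a ⊗ₜ b′) fun b c ↦ by
        simp only [map_add, TensorProduct.tmul_add]; abel)
      fun a c ↦ by
        ext b
        simp only [map_add, TensorProduct.add_tmul, AddMonoidHom.mk'_apply, AddMonoidHom.add_apply]
        abel)
    fun r a b ↦ by
      simp only [AddMonoidHom.mk'_apply, Algebra.smul_def, Derivation.leibniz, deriv_algebraMap]
      simp only [smul_eq_mul, ← Algebra.smul_def, mul_comm a, mul_comm b, TensorProduct.add_tmul,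
        TensorProduct.tmul_add, TensorProduct.smul_tmul, TensorProduct.tmul_smul]
      abel

lemma tensorDeriv_mul (x y : A ⊗[M] B) :
    tensorDeriv M A B (x * y) = x * tensorDeriv M A B y + y * tensorDeriv M A B x := by
  induction x using TensorProduct.induction_on with
  | zero => simp
  | add x₁ x₂ h₁ h₂ => rw [add_mul, map_add, h₁, h₂, map_add]; ring
  | tmul a b =>
    induction y using TensorProduct.induction_on with
    | zero => simp
    | add x₁ x₂ h₁ h₂ => rw [mul_add, map_add, h₁, h₂, map_add]; ring
    | tmul c d =>
      simp only [tensorDeriv, TensorProduct.liftAddHom_tmul, AddMonoidHom.mk'_apply,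
        Algebra.TensorProduct.tmul_mul_tmul, Derivation.leibniz, smul_eq_mul, mul_add,
        TensorProduct.add_tmul, TensorProduct.tmul_add, mul_comm c, mul_comm d]
      abel

noncomputable instance : Differential (A ⊗[M] B) where
  deriv := Derivation.mk' (tensorDeriv M A B).toIntLinearMap tensorDeriv_mul

lemma deriv_tmul (a : A) (b : B) : (a ⊗ₜ[M] b)′ = a′ ⊗ₜ b + a ⊗ₜ b′ := rfl

instance : DifferentialAlgebra A (A ⊗[M] B) where
  deriv_algebraMap a := by simp [deriv_tmul]

variable (M A B) in
lemma isDiffHom_includeRight :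
    IsDiffHom (Algebra.TensorProduct.includeRight : B →ₐ[M] A ⊗[M] B).toRingHom := fun b ↦ by
  simp [deriv_tmul]

end TensorProduct

section FractionField

variable (B F : Type*) [CommRing B] [Differential B] [Field F] [Algebra B F]

/-- The ring homomorphism `b ↦ b + b′ε` into the dual numbers over a field `F`. -/
def toDualNumber : B →+* DualNumber F where
  toFun b := .inl (algebraMap B F b) + .inr (algebraMap B F b′)
  map_one' := by simp
  map_zero' := by simp
  map_add' x y := by ext <;> simp [-DualNumber.inr_eq_smul_eps]
  map_mul' x y := by ext <;> simp [-DualNumber.inr_eq_smul_eps, mul_comm]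

lemma fst_toDualNumber (b : B) : (toDualNumber B F b).fst = algebraMap B F b := by
  simp [toDualNumber]

lemma snd_toDualNumber (b : B) : (toDualNumber B F b).snd = algebraMap B F b′ := by
  simp [toDualNumber, -DualNumber.inr_eq_smul_eps]

variable [IsFractionRing B F]

/-- The extension of `toDualNumber` to fractions; its second component is a derivation. -/
noncomputable def fractionToDualNumber : F →+* DualNumber F :=
  IsLocalization.lift (M := nonZeroDivisors B) (g := toDualNumber B F) fun y ↦ by
    rw [TrivSqZeroExt.isUnit_iff_isUnit_fst, fst_toDualNumber]
    exact IsLocalization.map_units F y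

lemma fractionToDualNumber_algebraMap (b : B) :
    fractionToDualNumber B F (algebraMap B F b) = toDualNumber B F b :=
  IsLocalization.lift_eq _ b

lemma fst_fractionToDualNumber (x : F) : (fractionToDualNumber B F x).fst = x := by
  have h : (TrivSqZeroExt.fstHom F F F).toRingHom.comp (fractionToDualNumber B F) =
      RingHom.id F := by
    refine IsLocalization.ringHom_ext (nonZeroDivisors B) (RingHom.ext fun b ↦ ?_)
    simp [fractionToDualNumber_algebraMap, fst_toDualNumber]
  exact RingHom.congr_fun h x

/-- The extension of the derivation of `B` to its fraction field. -/
noncomputable def fractionDeriv : Derivation ℤ F F :=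
  Derivation.mk' (AddMonoidHom.mk' (fun x ↦ (fractionToDualNumber B F x).snd)
    fun x y ↦ by simp).toIntLinearMap fun x y ↦ by
      simp [fst_fractionToDualNumber, mul_comm]

noncomputable instance [IsDomain B] : Differential (FractionRing B) :=
  ⟨fractionDeriv B (FractionRing B)⟩

lemma fractionDeriv_algebraMap (b : B) :
    fractionDeriv B F (algebraMap B F b) = algebraMap B F b′ := by
  rw [← snd_toDualNumber, ← fractionToDualNumber_algebraMap]
  rfl

instance {A : Type*} [CommRing A] [Differential A] [Algebra A B] [DifferentialAlgebra A B]
    [IsDomain B] : DifferentialAlgebra A (FractionRing B) where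
  deriv_algebraMap a := by
    rw [IsScalarTower.algebraMap_apply A B (FractionRing B) a′, ← deriv_algebraMap a,
      IsScalarTower.algebraMap_apply A B (FractionRing B) a]
    exact fractionDeriv_algebraMap B (FractionRing B) _

/-- The ideal of denominators of a fraction `x`. -/
def denominatorIdeal (B : Type*) {F : Type*} [CommRing B] [Field F] [Algebra B F] (x : F) :
    Ideal B where
  carrier := {h | ∃ b, algebraMap B F b = algebraMap B F h * x}
  zero_mem' := ⟨0, by simp⟩
  add_mem' := by
    rintro a b ⟨c, hc⟩ ⟨d, hd⟩
    exact ⟨c + d, by rw [map_add, map_add, hc, hd, add_mul]⟩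
  smul_mem' := by
    rintro a b ⟨c, hc⟩
    exact ⟨a * c, by rw [smul_eq_mul, map_mul, map_mul, hc, mul_assoc]⟩

lemma containConstants_of_isFractionRing [IsDiffSimple B] [Differential F]
    [DifferentialAlgebra B F] : Differential.ContainConstants B F where
  mem_range_of_deriv_eq_zero {x} hx := by
    have hdiff : IsDifferentialIdeal (denominatorIdeal B x) := by
      rintro a ⟨c, hc⟩
      exact ⟨c′, by rw [← deriv_algebraMap, hc, Derivation.leibniz, hx, smul_zero, zero_add,
        smul_eq_mul, deriv_algebraMap, mul_comm]⟩
    obtain ⟨a, b, hb, hab⟩ := IsFractionRing.div_surjective (A := B) x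
    have hb_mem : b ∈ denominatorIdeal B x := by
      refine ⟨a, ?_⟩
      rw [← hab, mul_div_cancel₀ _ (IsFractionRing.to_map_ne_zero_of_mem_nonZeroDivisors hb)]
    have hone : (1 : B) ∈ denominatorIdeal B x := by
      by_contra h1
      rw [IsDiffSimple.eq_bot hdiff h1, Ideal.mem_bot] at hb_mem
      exact nonZeroDivisors.ne_zero hb hb_mem
    obtain ⟨c, hc⟩ := hone
    exact ⟨c, by rw [hc, map_one, one_mul]⟩

end FractionField

section Amalgamation

/-- An embedding of differential fields which adds no new constants. -/
structure IsConservative {K L : Type*} [Field K] [Differential K] [Field L] [Differential L]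
    (f : K →+* L) : Prop where
  isDiffHom : IsDiffHom f
  mem_range : ∀ {x : L}, x′ = 0 → x ∈ f.range

namespace IsConservative

variable {K L M : Type u} [Field K] [Differential K] [Field L] [Differential L] [Field M]
  [Differential M]

lemma id : IsConservative (RingHom.id K) :=
  ⟨fun _ ↦ rfl, fun {x} _ ↦ ⟨x, rfl⟩⟩

lemma exists_constant {f : K →+* L} (hf : IsConservative f) {x : L} (hx : x′ = 0) :
    ∃ c : K, c′ = 0 ∧ f c = x := by
  obtain ⟨c, rfl⟩ := hf.mem_range hx
  exact ⟨c, f.injective (by rw [hf.isDiffHom, hx, map_zero]), rfl⟩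

lemma comp {g : L →+* M} {f : K →+* L} (hg : IsConservative g) (hf : IsConservative f) :
    IsConservative (g.comp f) where
  isDiffHom := hg.isDiffHom.comp hf.isDiffHom
  mem_range hx := by
    obtain ⟨y, hy, rfl⟩ := hg.exists_constant hx
    obtain ⟨z, rfl⟩ := hf.mem_range hy
    exact ⟨z, rfl⟩

lemma isAlgClosed_constants_iff {f : K →+* L} (hf : IsConservative f) :
    IsAlgClosed (constants K) ↔ IsAlgClosed (constants L) := by
  let g : constants K →+* constants L :=
    (f.comp (constants K).subtype).codRestrict (constants L) fun c ↦ by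
      rw [mem_constants, RingHom.comp_apply, ← hf.isDiffHom, Subfield.coe_subtype,
        mem_constants.mp c.2, map_zero]
  have hg : Function.Surjective g := fun x ↦ by
    obtain ⟨c, hc, hcx⟩ := hf.exists_constant (mem_constants.mp x.2)
    exact ⟨⟨c, mem_constants.mpr hc⟩, Subtype.ext hcx⟩
  let e : constants K ≃+* constants L := .ofBijective g ⟨g.injective, hg⟩
  exact ⟨fun _ ↦ .of_ringEquiv _ _ e, fun _ ↦ .of_ringEquiv _ _ e.symm⟩

lemma isAlgClosed_constants {f : K →+* L} (hf : IsConservative f) [h : IsAlgClosed (constants K)] :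
    IsAlgClosed (constants L) :=
  hf.isAlgClosed_constants_iff.mp h

end IsConservative

/-- An embedding `ψ : M → L` of differential fields *has amalgams* if `L` embeds, compatibly with
every differential embedding `φ : M → K` into a field with algebraically closed constants, into an
extension of `K` without new constants. -/
def HasAmalgams {M L : Type u} [Field M] [Differential M] [Field L] [Differential L]
    (ψ : M →+* L) : Prop :=
  ∀ (K : Type u) [Field K] [CharZero K] [Differential K] [IsAlgClosed (constants K)]
    (φ : M →+* K), IsDiffHom φ →
    ∃ (K' : Type u) (_ : Field K') (_ : Differential K') (α : K →+* K') (β : L →+* K'),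
      IsConservative α ∧ IsDiffHom β ∧ α.comp φ = β.comp ψ

variable {M L N : Type u} [Field M] [Differential M] [Field L] [Differential L] [Field N]
  [Differential N]

namespace HasAmalgams

lemma comp {χ : L →+* N} {ψ : M →+* L} (hχ : HasAmalgams χ) (hψ : HasAmalgams ψ) :
    HasAmalgams (χ.comp ψ) := by
  intro K _ _ _ _ φ hφ
  obtain ⟨K₁, _, _, α₁, β₁, hα₁, hβ₁, h₁⟩ := hψ K φ hφ
  have : CharZero K₁ := charZero_of_injective_ringHom α₁.injective
  have : IsAlgClosed (constants K₁) := hα₁.isAlgClosed_constants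
  obtain ⟨K₂, _, _, α₂, β₂, hα₂, hβ₂, h₂⟩ := hχ K₁ β₁ hβ₁
  refine ⟨K₂, _, _, α₂.comp α₁, β₂, hα₂.comp hα₁, hβ₂, ?_⟩
  rw [RingHom.comp_assoc, h₁, ← RingHom.comp_assoc, h₂, RingHom.comp_assoc]

lemma of_surjective {ψ : M →+* L} (hψ : IsDiffHom ψ) (hsurj : Function.Surjective ψ) :
    HasAmalgams ψ := by
  intro K _ _ _ _ φ hφ
  let e : M ≃+* L := RingEquiv.ofBijective ψ ⟨ψ.injective, hsurj⟩
  have he (x : M) : e.symm (ψ x) = x := e.symm_apply_apply x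
  refine ⟨K, _, _, RingHom.id K, φ.comp e.symm, .id, fun x ↦ ?_, ?_⟩
  · obtain ⟨x, rfl⟩ := hsurj x
    simp [← hψ x, he, hφ x]
  · ext x
    simp [he]

lemma isConservative {ψ : M →+* L} (h : HasAmalgams ψ) (hψ : IsDiffHom ψ) [CharZero M]
    [IsAlgClosed (constants M)] : IsConservative ψ := by
  obtain ⟨K', _, _, α, β, hα, hβ, hαβ⟩ := h M (RingHom.id M) fun _ ↦ rfl
  refine ⟨hψ, fun {x} hx ↦ ?_⟩
  obtain ⟨m, hm⟩ := hα.mem_range (x := β x) (by rw [← hβ, hx, map_zero])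
  exact ⟨m, β.injective ((RingHom.congr_fun hαβ m).symm.trans hm)⟩

end HasAmalgams

lemma IsDiffHom.of_comp_algebraMap {P F K : Type*} [CommRing P] [Differential P] [Field F]
    [Differential F] [Algebra P F] [DifferentialAlgebra P F] [IsFractionRing P F] [Field K]
    [Differential K] {f : F →+* K} (hf : IsDiffHom (f.comp (algebraMap P F))) : IsDiffHom f := by
  intro x
  obtain ⟨a, b, -, rfl⟩ := IsFractionRing.div_surjective (A := P) x
  have h (p : P) : f (algebraMap P F p)′ = (f (algebraMap P F p))′ := by
    rw [deriv_algebraMap]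
    exact hf p
  rw [Derivation.leibniz_div, map_div₀, Derivation.leibniz_div, ← h, ← h]
  simp

lemma isConservative_algebraMap_fractionRing (K B : Type*) [Field K] [CharZero K] [Differential K]
    [IsAlgClosed (constants K)] [CommRing B] [IsDomain B] [Differential B] [IsDiffSimple B]
    [Algebra K B] [DifferentialAlgebra K B] [Algebra.FiniteType K B] :
    IsConservative (algebraMap K (FractionRing B)) where
  isDiffHom := isDiffHom_algebraMap
  mem_range {x} hx := by
    have := containConstants_of_isDiffSimple K B
    have := containConstants_of_isFractionRing B (FractionRing B)
    obtain ⟨b, rfl⟩ := mem_range_of_deriv_eq_zero B hx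
    have hb : b′ = 0 :=
      IsFractionRing.injective B (FractionRing B) (by rw [← deriv_algebraMap, hx, map_zero])
    obtain ⟨c, rfl⟩ := mem_range_of_deriv_eq_zero K hb
    exact ⟨c, IsScalarTower.algebraMap_apply K B _ c⟩

/-- The canonical map from `P` to a differentially simple quotient of `K ⊗[M] P`. -/
noncomputable def toTensorQuotient (M K P : Type*) [CommRing M] [CommRing K] [CommRing P]
    [Algebra M K] [Algebra M P] [Differential M] [Differential K] [Differential P]
    [DifferentialAlgebra M K] [DifferentialAlgebra M P] [Nontrivial (K ⊗[M] P)] :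
    P →+* SimpleQuotient (K ⊗[M] P) :=
  (Ideal.Quotient.mk _).comp Algebra.TensorProduct.includeRight.toRingHom

section ToTensorQuotient

variable (M K P : Type*) [CommRing M] [CommRing K] [CommRing P] [Algebra M K] [Algebra M P]
  [Differential M] [Differential K] [Differential P] [DifferentialAlgebra M K]
  [DifferentialAlgebra M P] [Nontrivial (K ⊗[M] P)]

lemma isDiffHom_toTensorQuotient : IsDiffHom (toTensorQuotient M K P) :=
  (SimpleQuotient.isDiffHom_mk _).comp (isDiffHom_includeRight M K P)

lemma toTensorQuotient_algebraMap (m : M) :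
    toTensorQuotient M K P (algebraMap M P m) = algebraMap K _ (algebraMap M K m) :=
  congrArg (Ideal.Quotient.mk _) (Algebra.TensorProduct.tmul_one_eq_one_tmul m).symm

end ToTensorQuotient

lemma exists_isDiffHom_comp_algebraMap_eq {P F K : Type*} [CommRing P] [Differential P]
    [IsDiffSimple P] [Field F] [Differential F] [Algebra P F] [DifferentialAlgebra P F]
    [IsFractionRing P F] [Field K] [Differential K] {γ : P →+* K} (hγ : IsDiffHom γ) :
    ∃ β : F →+* K, IsDiffHom β ∧ β.comp (algebraMap P F) = γ := by
  have hinj : Function.Injective γ := IsDiffSimple.injective hγ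
  have hβ : (IsFractionRing.lift (K := F) hinj).comp (algebraMap P F) = γ :=
    RingHom.ext (IsFractionRing.lift_algebraMap hinj)
  exact ⟨_, .of_comp_algebraMap (P := P) (hβ.symm ▸ hγ), hβ⟩

-- The amalgam is the fraction field of a simple quotient of `K ⊗[M] P`.
lemma hasAmalgams_algebraMap (P : Type u) [CommRing P] [Differential P] [Algebra M P]
    [DifferentialAlgebra M P] [Algebra.FiniteType M P] [IsDiffSimple P] [Algebra P L]
    [DifferentialAlgebra P L] [IsFractionRing P L] [Algebra M L] [IsScalarTower M P L] :
    HasAmalgams (algebraMap M L) := by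
  intro K _ _ _ _ φ hφ
  let _ : Algebra M K := φ.toAlgebra
  have : DifferentialAlgebra M K := ⟨fun a ↦ (hφ a).symm⟩
  have : Nontrivial (K ⊗[M] P) :=
    (Algebra.TensorProduct.includeRight_injective (algebraMap M K).injective).nontrivial
  let B := SimpleQuotient (K ⊗[M] P)
  have : CharZero B := charZero_of_injective_algebraMap (algebraMap K B).injective
  obtain ⟨β, hβ, hβγ⟩ := exists_isDiffHom_comp_algebraMap_eq (F := L)
    (isDiffHom_algebraMap.comp (isDiffHom_toTensorQuotient M K P) :
      IsDiffHom ((algebraMap B (FractionRing B)).comp _))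
  refine ⟨FractionRing B, _, _, algebraMap K _, β, isConservative_algebraMap_fractionRing K B, hβ,
    ?_⟩
  rw [IsScalarTower.algebraMap_eq M P L, ← RingHom.comp_assoc, hβγ, RingHom.comp_assoc,
    IsScalarTower.algebraMap_eq K B (FractionRing B), RingHom.comp_assoc]
  congr 1
  ext m
  exact (toTensorQuotient_algebraMap M K P m).symm

end Amalgamation

section FundamentalMatrix

variable {ι : Type*}

/-- The set of entries of a matrix. -/
def matrixEntries {R : Type*} (W : Matrix ι ι R) : Set R :=
  Set.range (Function.uncurry W)

lemma apply_mem_matrixEntries {R : Type*} (W : Matrix ι ι R) (i j : ι) :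
    W i j ∈ matrixEntries W :=
  ⟨(i, j), rfl⟩

lemma IsDiffHom.map_deriv_map {R S : Type*} [CommRing R] [Differential R] [CommRing S]
    [Differential S] {f : R →+* S} (hf : IsDiffHom f) (W : Matrix ι ι R) :
    (W.map f).map (·′) = (W.map (·′)).map f := by
  ext i j
  exact (hf (W i j)).symm

variable [Fintype ι]

lemma map_algebraMap_mul_map {M R S : Type*} [CommRing M] [CommRing R] [CommRing S] [Algebra M R]
    [Algebra M S] (f : R →ₐ[M] S) (A : Matrix ι ι M) (W : Matrix ι ι R) :
    (A.map (algebraMap M R) * W).map f = A.map (algebraMap M S) * W.map f := by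
  rw [Matrix.map_mul, Matrix.map_map]
  congr 2
  exact funext f.commutes

lemma mul_apply_mem {σ R : Type*} [CommRing R] [SetLike σ R] [SubringClass σ R] {T : σ}
    {X Y : Matrix ι ι R} (hX : ∀ i j, X i j ∈ T) (hY : ∀ i j, Y i j ∈ T) (i j : ι) :
    (X * Y) i j ∈ T := by
  rw [Matrix.mul_apply]
  exact sum_mem fun l _ ↦ mul_mem (hX i l) (hY l j)

lemma map_deriv_mul {R : Type*} [CommRing R] [Differential R] (X Y : Matrix ι ι R) :
    (X * Y).map (·′) = X.map (·′) * Y + X * Y.map (·′) := by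
  ext i j
  simp only [Matrix.map_apply, Matrix.mul_apply, Matrix.add_apply, map_sum, Derivation.leibniz,
    smul_eq_mul, Finset.sum_add_distrib, add_comm, mul_comm]

variable [DecidableEq ι] {M R S : Type*} [CommRing M] [CommRing R] [Differential R] [Algebra M R]
  [CommRing S] [Differential S] [Algebra M S]

/-- `W` is a fundamental matrix, with inverse `V`, of the linear differential system
`Y′ = A * Y`. -/
structure IsFundamentalMatrix (A : Matrix ι ι M) (W V : Matrix ι ι R) : Prop where
  map_deriv_eq : W.map (·′) = A.map (algebraMap M R) * W
  inv_mul : V * W = 1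

namespace IsFundamentalMatrix

variable {A : Matrix ι ι M} {W V W₁ V₁ W₂ V₂ : Matrix ι ι R}

lemma map_deriv_inv_eq (h : IsFundamentalMatrix A W V) :
    V.map (·′) = -(V * A.map (algebraMap M R)) := by
  have hmul : W * V = 1 := mul_eq_one_comm.mp h.inv_mul
  have hderiv : V.map (·′) * W + V * (A.map (algebraMap M R) * W) = 0 := by
    rw [← h.map_deriv_eq, ← map_deriv_mul, h.inv_mul]
    ext i j
    by_cases hij : i = j <;> simp [hij]
  calc V.map (·′) = V.map (·′) * W * V := by rw [Matrix.mul_assoc, hmul, Matrix.mul_one]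
    _ = -(V * (A.map (algebraMap M R) * W)) * V := by rw [eq_neg_of_add_eq_zero_left hderiv]
    _ = -(V * A.map (algebraMap M R)) := by
      rw [Matrix.neg_mul, Matrix.mul_assoc, Matrix.mul_assoc, hmul, Matrix.mul_one]

lemma map (h : IsFundamentalMatrix A W V) {f : R →ₐ[M] S} (hf : IsDiffHom f.toRingHom) :
    IsFundamentalMatrix A (W.map f) (V.map f) where
  map_deriv_eq := by
    rw [← map_algebraMap_mul_map, ← h.map_deriv_eq]
    exact hf.map_deriv_map W
  inv_mul := by rw [← Matrix.map_mul, h.inv_mul, Matrix.map_one f (map_zero f) (map_one f)]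

lemma of_map {f : R →ₐ[M] S} (hf : IsDiffHom f.toRingHom) (hinj : Function.Injective f)
    (h : IsFundamentalMatrix A (W.map f) (V.map f)) : IsFundamentalMatrix A W V where
  map_deriv_eq := Matrix.map_injective hinj <|
    (hf.map_deriv_map W).symm.trans (h.map_deriv_eq.trans (map_algebraMap_mul_map f A W).symm)
  inv_mul := Matrix.map_injective hinj <|
    Matrix.map_mul.trans (h.inv_mul.trans (Matrix.map_one f (map_zero f) (map_one f)).symm)

lemma map_deriv_inv_mul_eq_zero (h₁ : IsFundamentalMatrix A W₁ V₁)
    (h₂ : IsFundamentalMatrix A W₂ V₂) : (V₁ * W₂).map (·′) = 0 := by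
  rw [map_deriv_mul, h₁.map_deriv_inv_eq, h₂.map_deriv_eq, Matrix.neg_mul, Matrix.mul_assoc,
    neg_add_cancel]

lemma inv_mul_apply_mem [Differential M] [Differential.ContainConstants M R]
    (h₁ : IsFundamentalMatrix A W₁ V₁) (h₂ : IsFundamentalMatrix A W₂ V₂) (T : Subalgebra M R)
    (i j : ι) : (V₁ * W₂) i j ∈ T := by
  obtain ⟨c, hc⟩ := mem_range_of_deriv_eq_zero M
    (congrFun₂ (h₁.map_deriv_inv_mul_eq_zero h₂) i j)
  exact hc ▸ T.algebraMap_mem c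

lemma range_le [Differential M] [Differential.ContainConstants M S]
    (h : IsFundamentalMatrix A W V)
    (hgen : Algebra.adjoin M (matrixEntries W ∪ matrixEntries V) = ⊤) {f g : R →ₐ[M] S}
    (hf : IsDiffHom f.toRingHom) (hg : IsDiffHom g.toRingHom) : g.range ≤ f.range := by
  have hmul : W.map f * V.map f = 1 := mul_eq_one_comm.mp (h.map hf).inv_mul
  have hW : W.map f * (V.map f * W.map g) = W.map g := by
    rw [← Matrix.mul_assoc, hmul, Matrix.one_mul]
  have hV : V.map g * W.map f * V.map f = V.map g := by
    rw [Matrix.mul_assoc, hmul, Matrix.mul_one]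
  rw [← Algebra.map_top, ← hgen, AlgHom.map_adjoin, Algebra.adjoin_le_iff]
  rintro _ ⟨_, (⟨⟨i, j⟩, rfl⟩ | ⟨⟨i, j⟩, rfl⟩), rfl⟩
  · change W.map g i j ∈ f.range
    rw [← hW]
    exact mul_apply_mem (fun i j ↦ f.mem_range_self (W i j))
      ((h.map hf).inv_mul_apply_mem (h.map hg) _) i j
  · change V.map g i j ∈ f.range
    rw [← hV]
    exact mul_apply_mem ((h.map hg).inv_mul_apply_mem (h.map hf) _)
      (fun i j ↦ f.mem_range_self (V i j)) i j

end IsFundamentalMatrix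

lemma IsDiffSimple.of_range_eq {Q P B : Type*} [CommRing Q] [Differential Q] [IsDiffSimple Q]
    [CommRing P] [Differential P] [CommRing B] [Differential B] [Nontrivial B] {f : P →+* B}
    {β : Q →+* B} (hf : IsDiffHom f) (hβ : IsDiffHom β) (hinj : Function.Injective f)
    (h : f.range = β.range) : IsDiffSimple P := by
  have := f.domain_nontrivial
  choose s hs using fun q ↦ (h ▸ ⟨q, rfl⟩ : β q ∈ f.range)
  let e : Q →+* P :=
    { toFun := s
      map_one' := hinj (by simp [hs])
      map_mul' x y := hinj (by simp [hs])
      map_zero' := hinj (by simp [hs])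
      map_add' x y := hinj (by simp [hs]) }
  refine .of_surjective (f := e) (fun q ↦ hinj ?_) fun p ↦ ?_
  · rw [hf]
    exact (hs _).trans ((hβ q).trans (congrArg _ (hs q).symm))
  · obtain ⟨q, hq⟩ := (h ▸ ⟨p, rfl⟩ : f p ∈ β.range)
    exact ⟨q, hinj ((hs q).trans hq)⟩

lemma IsConservative.containConstants {M L : Type*} [Field M] [Differential M] [Field L]
    [CharZero L] [Differential L] [IsAlgClosed (constants L)] [Algebra M L]
    (hML : IsConservative (algebraMap M L)) (B : Type*) [CommRing B] [Differential B]
    [IsDiffSimple B] [Algebra L B] [DifferentialAlgebra L B] [Algebra.FiniteType L B] [Algebra M B]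
    [IsScalarTower M L B] : Differential.ContainConstants M B where
  mem_range_of_deriv_eq_zero {b} hb := by
    have : CharZero B := charZero_of_injective_algebraMap (algebraMap L B).injective
    have := containConstants_of_isDiffSimple L B
    obtain ⟨x, rfl⟩ := mem_range_of_deriv_eq_zero L hb
    have hx : x′ = 0 := (algebraMap L B).injective (by rw [← deriv_algebraMap, hb, map_zero])
    obtain ⟨c, rfl⟩ := hML.mem_range hx
    exact ⟨c, IsScalarTower.algebraMap_apply M L B c⟩

-- If `Q` is a simple quotient of `P` and `B` a simple quotient of `L ⊗[M] Q`, then `P → L → B` and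
-- `P → Q → B` have the same range, so `P` is isomorphic to `Q`.
lemma isDiffSimple_of_isFundamentalMatrix {M L P : Type u} [Field M] [Differential M]
    [IsAlgClosed (constants M)] [Field L] [CharZero L] [Differential L] [Algebra M L]
    [CommRing P] [Differential P] [Algebra M P] [DifferentialAlgebra M P] [Algebra.FiniteType M P]
    [Algebra P L] [DifferentialAlgebra P L] [FaithfulSMul P L] [IsScalarTower M P L]
    (hML : IsConservative (algebraMap M L)) {A : Matrix ι ι M} {W V : Matrix ι ι P}
    (h : IsFundamentalMatrix A W V)
    (hgen : Algebra.adjoin M (matrixEntries W ∪ matrixEntries V) = ⊤) : IsDiffSimple P := by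
  have : Nontrivial P := (algebraMap P L).domain_nontrivial
  have : DifferentialAlgebra M L := ⟨fun m ↦ (hML.isDiffHom m).symm⟩
  have : IsAlgClosed (constants L) := hML.isAlgClosed_constants
  have : Nontrivial (L ⊗[M] SimpleQuotient P) :=
    (Algebra.TensorProduct.includeRight_injective (algebraMap M L).injective).nontrivial
  let B := SimpleQuotient (L ⊗[M] SimpleQuotient P)
  let f : P →ₐ[M] B := (IsScalarTower.toAlgHom M L B).comp (IsScalarTower.toAlgHom M P L)
  let g : P →ₐ[M] B :=
    { (toTensorQuotient M L (SimpleQuotient P)).comp (Ideal.Quotient.mk _) with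
      commutes' := toTensorQuotient_algebraMap M L (SimpleQuotient P) }
  have hβ : IsDiffHom (toTensorQuotient M L (SimpleQuotient P)) :=
    isDiffHom_toTensorQuotient M L (SimpleQuotient P)
  have hf : IsDiffHom f.toRingHom := isDiffHom_algebraMap.comp isDiffHom_algebraMap
  have hg : IsDiffHom g.toRingHom := hβ.comp (SimpleQuotient.isDiffHom_mk P)
  have : Differential.ContainConstants M B := hML.containConstants B
  have hrange : f.range = g.range := (h.range_le hgen hg hf).antisymm (h.range_le hgen hf hg)
  refine .of_range_eq hf hβ
    ((algebraMap L B).injective.comp (FaithfulSMul.algebraMap_injective P L)) ?_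
  calc f.toRingHom.range = g.toRingHom.range := congrArg Subalgebra.toSubring hrange
    _ = ((Ideal.Quotient.mk (maxDiffIdeal P)).range.map
        (toTensorQuotient M L (SimpleQuotient P))) := (RingHom.map_range _ _).symm
    _ = (toTensorQuotient M L (SimpleQuotient P)).range := by
      rw [RingHom.range_eq_top.mpr Ideal.Quotient.mk_surjective, ← RingHom.range_eq_map]

end FundamentalMatrix

section Stable

/-- A subobject of a differential ring (a subfield, a subalgebra, …) which is stable under the
derivation. -/
class IsDiffStable {σ R : Type*} [CommRing R] [Differential R] [SetLike σ R] (P : σ) : Prop where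
  deriv_mem {x : R} : x ∈ P → x′ ∈ P

section SubringClass

variable {σ R : Type*} [CommRing R] [Differential R] [SetLike σ R] [SubringClass σ R] (P : σ)
  [IsDiffStable P]

instance : Differential P where
  deriv := .mk' (AddMonoidHom.mk' (fun x : P ↦ (⟨x′, IsDiffStable.deriv_mem x.2⟩ : P))
    fun a b ↦ Subtype.ext (map_add _ (a : R) b)).toIntLinearMap
    fun a b ↦ Subtype.ext (Derivation.leibniz _ (a : R) b)

end SubringClass

lemma isDiffStable_adjoin {M R : Type*} [CommRing M] [Differential M] [CommRing R] [Differential R]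
    [Algebra M R] [DifferentialAlgebra M R] {s : Set R}
    (hs : ∀ x ∈ s, x′ ∈ Algebra.adjoin M s) : IsDiffStable (Algebra.adjoin M s) where
  deriv_mem {x} hx := by
    induction hx using Algebra.adjoin_induction with
    | mem x hx => exact hs x hx
    | algebraMap r => exact deriv_algebraMap (B := R) r ▸ Subalgebra.algebraMap_mem _ _
    | add x y _ _ hx' hy' => exact map_add Differential.deriv x y ▸ add_mem hx' hy'
    | mul x y hx hy hx' hy' =>
      rw [Derivation.leibniz]
      exact add_mem (mul_mem hx hy') (mul_mem hy hx')

instance {M L : Type*} [CommRing M] [Differential M] [Field L] [Differential L] [Algebra M L]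
    [DifferentialAlgebra M L] (P : Subalgebra M L) [IsDiffStable P] : DifferentialAlgebra M P where
  deriv_algebraMap m := Subtype.ext (deriv_algebraMap (B := L) m)

instance {M L : Type*} [CommRing M] [Field L] [Differential L] [Algebra M L]
    (P : Subalgebra M L) [IsDiffStable P] : DifferentialAlgebra P L where
  deriv_algebraMap _ := rfl

variable {ι : Type*} [Fintype ι] [DecidableEq ι]

lemma IsFundamentalMatrix.isDiffStable_adjoin {M R : Type*} [CommRing M] [Differential M]
    [CommRing R] [Differential R] [Algebra M R] [DifferentialAlgebra M R] {A : Matrix ι ι M}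
    {W V : Matrix ι ι R} (h : IsFundamentalMatrix A W V) :
    IsDiffStable (Algebra.adjoin M (matrixEntries W ∪ matrixEntries V)) := by
  have hA (i j : ι) : A.map (algebraMap M R) i j ∈ Algebra.adjoin M
    (matrixEntries W ∪ matrixEntries V) := Subalgebra.algebraMap_mem _ _
  refine PicardVessiot.isDiffStable_adjoin ?_
  rintro _ (⟨⟨i, j⟩, rfl⟩ | ⟨⟨i, j⟩, rfl⟩)
  · refine Set.mem_of_eq_of_mem (congrFun₂ h.map_deriv_eq i j) ?_
    exact mul_apply_mem hA
      (fun i j ↦ Algebra.subset_adjoin (.inl (apply_mem_matrixEntries W i j))) i j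
  · refine Set.mem_of_eq_of_mem (congrFun₂ h.map_deriv_inv_eq i j) (neg_mem ?_)
    exact mul_apply_mem
      (fun i j ↦ Algebra.subset_adjoin (.inr (apply_mem_matrixEntries V i j))) hA i j

lemma exists_isFundamentalMatrix_adjoin {M R : Type*} [CommRing M] [CommRing R] [Differential R]
    [Algebra M R] {A : Matrix ι ι M} {W V : Matrix ι ι R} (h : IsFundamentalMatrix A W V)
    [IsDiffStable (Algebra.adjoin M (matrixEntries W ∪ matrixEntries V))] :
    ∃ W' V' : Matrix ι ι (Algebra.adjoin M (matrixEntries W ∪ matrixEntries V)),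
      IsFundamentalMatrix A W' V' ∧
      Algebra.adjoin M (matrixEntries W' ∪ matrixEntries V') = ⊤ := by
  let W' : Matrix ι ι (Algebra.adjoin M (matrixEntries W ∪ matrixEntries V)) := .of fun i j ↦
    ⟨W i j, Algebra.subset_adjoin (.inl (apply_mem_matrixEntries W i j))⟩
  let V' : Matrix ι ι (Algebra.adjoin M (matrixEntries W ∪ matrixEntries V)) := .of fun i j ↦
    ⟨V i j, Algebra.subset_adjoin (.inr (apply_mem_matrixEntries V i j))⟩
  refine ⟨W', V', .of_map (f := Subalgebra.val _) (fun _ ↦ rfl) Subtype.val_injective h, ?_⟩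
  rw [← Algebra.adjoin_adjoin_coe_preimage]
  congr 1
  ext ⟨x, hx⟩
  exact or_congr (exists_congr fun _ ↦ Subtype.ext_iff) (exists_congr fun _ ↦ Subtype.ext_iff)

lemma hasAmalgams_of_isFundamentalMatrix {M L : Type u} [Field M] [Differential M]
    [IsAlgClosed (constants M)] [Field L] [CharZero L] [Differential L] [Algebra M L]
    (hML : IsConservative (algebraMap M L)) {A : Matrix ι ι M} {W V : Matrix ι ι L}
    (h : IsFundamentalMatrix A W V) (hgen : IntermediateField.adjoin M (matrixEntries W) = ⊤) :
    HasAmalgams (algebraMap M L) := by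
  have : DifferentialAlgebra M L := ⟨fun m ↦ (hML.isDiffHom m).symm⟩
  have := h.isDiffStable_adjoin
  obtain ⟨W', V', h', htop⟩ := exists_isFundamentalMatrix_adjoin h
  let P := Algebra.adjoin M (matrixEntries W ∪ matrixEntries V)
  have hfinite : (matrixEntries W ∪ matrixEntries V).Finite :=
    (Set.finite_range _).union (Set.finite_range _)
  have : Algebra.FiniteType M P :=
    (Subalgebra.fg_iff_finiteType _).mp (Subalgebra.fg_def.mpr ⟨_, hfinite, rfl⟩)
  have : IsDiffSimple P := isDiffSimple_of_isFundamentalMatrix hML h' htop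
  have : IsFractionRing P L := .of_field P L fun x ↦ by
    obtain ⟨p, hp, q, hq, hx⟩ := IntermediateField.mem_adjoin_iff_div.mp
      (hgen ▸ IntermediateField.mem_top : x ∈ IntermediateField.adjoin M (matrixEntries W))
    exact ⟨⟨p, Algebra.adjoin_mono Set.subset_union_left hp⟩,
      ⟨q, Algebra.adjoin_mono Set.subset_union_left hq⟩, hx⟩
  exact hasAmalgams_algebraMap P

end Stable

section Wronskian

lemma exists_constant_mem_submodule {ι L : Type*} [Finite ι] [Field L] [Differential L]
    {U : Submodule L (ι → L)} (hU : ∀ v ∈ U, (fun i ↦ (v i)′) ∈ U) (hne : U ≠ ⊥) :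
    ∃ c ∈ U, c ≠ 0 ∧ ∀ i, (c i)′ = 0 := by
  obtain ⟨v, ⟨hvU, hv⟩, hmin⟩ := exists_minimalFor_of_wellFoundedLT
    (fun v ↦ v ∈ U ∧ v ≠ 0) Function.support (U.ne_bot_iff.mp hne)
  obtain ⟨i, hi⟩ := Function.ne_iff.mp hv
  let w := (v i)⁻¹ • v
  have hwU : w ∈ U := U.smul_mem _ hvU
  have hwi : w i = 1 := inv_mul_cancel₀ hi
  refine ⟨w, hwU, Function.ne_iff.mpr ⟨i, hwi ▸ one_ne_zero⟩, ?_⟩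
  by_contra! hw
  have hsupp : (Function.support fun j ↦ (w j)′) ⊆ Function.support v := fun j hj hvj ↦
    hj (by simp [w, hvj])
  exact hmin ⟨hU w hwU, Function.ne_iff.mpr hw⟩ hsupp hi (by simp [hwi])

lemma exists_constant_mulVec_eq_zero {ι L : Type*} [Fintype ι] [DecidableEq ι] [Field L]
    [Differential L] {A W : Matrix ι ι L} (hW : W.map (·′) = A * W) (hdet : W.det = 0) :
    ∃ c ≠ 0, (∀ i, (c i)′ = 0) ∧ W.mulVec c = 0 := by
  have hstable (v : ι → L) (hv : W.mulVec v = 0) : W.mulVec (fun i ↦ (v i)′) = 0 := by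
    have hAWv : (A * W).mulVec v = 0 := by rw [← Matrix.mulVec_mulVec, hv, Matrix.mulVec_zero]
    ext j
    have hderiv : (W.mulVec v j)′ = (W.map (·′)).mulVec v j + W.mulVec (fun i ↦ (v i)′) j := by
      simp only [Matrix.mulVec, dotProduct, map_sum, Derivation.leibniz, smul_eq_mul,
        Finset.sum_add_distrib, Matrix.map_apply, add_comm, mul_comm]
    simpa [hv, hW, hAWv] using hderiv.symm
  obtain ⟨v, hv, hWv⟩ := Matrix.exists_mulVec_eq_zero_iff.mpr hdet
  obtain ⟨c, hcW, hc, hc'⟩ := exists_constant_mem_submodule (U := LinearMap.ker W.mulVecLin)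
    hstable ((Submodule.ne_bot_iff _).mpr ⟨v, hWv, hv⟩)
  exact ⟨c, hc, hc', hcW⟩

variable {L : Type u} [Field L] {n : ℕ}

/-- The companion matrix of the operator `∂^n + a_{n-1} ∂^{n-1} + ⋯ + a_0`, which turns a scalar
linear differential equation into a first order system. -/
def companionMatrix {R : Type*} [Ring R] (a : Fin n → R) : Matrix (Fin n) (Fin n) R :=
  .of fun j l ↦ if (j : ℕ) + 1 < n then if (l : ℕ) = j + 1 then 1 else 0 else -a l

lemma companionMatrix_map {R S : Type*} [Ring R] [Ring S] (f : R →+* S) (a : Fin n → R) :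
    (companionMatrix a).map f = companionMatrix (f ∘ a) := by
  ext j l
  simp only [companionMatrix, Matrix.map_apply, Matrix.of_apply, apply_ite f, map_one, map_zero,
    map_neg, Function.comp_apply]

variable [Differential L]

/-- The Wronskian matrix of a family, whose `j`-th row consists of the `j`-th derivatives. -/
def wronskianMatrix (y : Fin n → L) : Matrix (Fin n) (Fin n) L :=
  .of fun j i ↦ Differential.deriv^[(j : ℕ)] (y i)

lemma map_deriv_wronskianMatrix {a y : Fin n → L}
    (hy : ∀ i, LApply Differential.deriv n a (y i) = 0) :
    (wronskianMatrix y).map (·′) = companionMatrix a * wronskianMatrix y := by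
  ext j i
  rw [Matrix.map_apply, Matrix.mul_apply, wronskianMatrix, Matrix.of_apply,
    ← Function.iterate_succ_apply' Differential.deriv]
  by_cases hj : (j : ℕ) + 1 < n
  · rw [Finset.sum_eq_single ⟨j + 1, hj⟩]
    · simp [companionMatrix, hj]
    · intro l _ hl
      simp [companionMatrix, hj, mt (fun h ↦ Fin.ext h) hl]
    · simp
  · have hjn : (j : ℕ).succ = n := by lia
    rw [hjn, eq_neg_of_add_eq_zero_left (hy i), ← Finset.sum_neg_distrib]
    simp [companionMatrix, hj]

lemma det_wronskianMatrix_ne_zero {a y : Fin n → L}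
    (hy : ∀ i, LApply Differential.deriv n a (y i) = 0)
    (hind : ∀ c : Fin n → L, (∀ i, (c i)′ = 0) → ∑ i, c i * y i = 0 → ∀ i, c i = 0) :
    (wronskianMatrix y).det ≠ 0 := by
  intro hdet
  obtain ⟨c, hc, hc', hWc⟩ := exists_constant_mulVec_eq_zero (map_deriv_wronskianMatrix hy) hdet
  refine hc (funext fun i ↦ hind c hc' ?_ i)
  have hrow := congrFun hWc ⟨0, i.pos⟩
  simpa [Matrix.mulVec, dotProduct, wronskianMatrix, mul_comm] using hrow

end Wronskian

section LinearExtension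

lemma isDiffStable_closure {E : Type*} [Field E] [Differential E] {s : Set E}
    (hs : ∀ x ∈ s, x′ ∈ Subfield.closure s) : IsDiffStable (Subfield.closure s) where
  deriv_mem {x} hx := by
    induction hx using Subfield.closure_induction with
    | mem x hx => exact hs x hx
    | one => exact Derivation.map_one_eq_zero (Differential.deriv (R := E)) ▸ zero_mem _
    | add x y _ _ hx' hy' => exact map_add Differential.deriv x y ▸ add_mem hx' hy'
    | neg x _ hx' => exact map_neg Differential.deriv x ▸ neg_mem hx'
    | inv x hx hx' =>
      rw [Derivation.leibniz_inv]
      exact mul_mem (neg_mem (pow_mem (inv_mem hx) 2)) hx'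
    | mul x y hx hy hx' hy' =>
      rw [Derivation.leibniz]
      exact add_mem (mul_mem hx hy') (mul_mem hy hx')

variable {E : Type u} [Field E] [Differential E] {k : Subfield E}

lemma diffGen_le {S : Set E} {F : Subfield E} [IsDiffStable F] (hk : k ≤ F) (hS : S ⊆ F) :
    diffGen Differential.deriv k S ≤ F :=
  sInf_le ⟨hk, hS, fun _ ↦ IsDiffStable.deriv_mem⟩

lemma IsFundamentalMatrix.isDiffStable_fieldAdjoin [IsDiffStable k] {ι : Type*} [Fintype ι]
    [DecidableEq ι] {A : Matrix ι ι k} {W V : Matrix ι ι E} (h : IsFundamentalMatrix A W V) :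
    IsDiffStable (IntermediateField.adjoin k (matrixEntries W)).toSubfield := by
  refine isDiffStable_closure ?_
  rintro _ (⟨m, rfl⟩ | ⟨⟨i, j⟩, rfl⟩)
  · exact Subfield.subset_closure (.inl ⟨m′, rfl⟩)
  · refine Set.mem_of_eq_of_mem (congrFun₂ h.map_deriv_eq i j) (mul_apply_mem ?_ ?_ i j)
    · exact fun i j ↦ Subfield.subset_closure (.inl ⟨A i j, rfl⟩)
    · exact fun i j ↦ Subfield.subset_closure (.inr (apply_mem_matrixEntries W i j))

variable {n : ℕ} {a : Fin n → E} [IsDiffStable k]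

lemma hasAmalgams_subtype_of_finite [Module.Finite k E] : HasAmalgams k.subtype :=
  have : DifferentialAlgebra k E := ⟨fun _ ↦ rfl⟩
  hasAmalgams_algebraMap E

lemma hasAmalgams_subtype_of_isPVWith [CharZero E] [IsAlgClosed (constants k)]
    (h : IsPVWith Differential.deriv k ⊤ n a) : HasAmalgams k.subtype := by
  obtain ⟨-, -, -, hcon, ha, y, -, hy, hind, hgen⟩ := h
  have hk : IsConservative (algebraMap k E) :=
    ⟨fun _ ↦ rfl, fun {x} hx ↦ ⟨⟨x, hcon x (Subfield.mem_top x) hx⟩, rfl⟩⟩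
  have hdet : (wronskianMatrix y).det ≠ 0 := det_wronskianMatrix_ne_zero hy fun c hc ↦
    hind c fun i ↦ ⟨hcon _ (Subfield.mem_top _) (hc i), hc i⟩
  let A : Matrix (Fin n) (Fin n) k := companionMatrix fun i ↦ ⟨a i, ha i⟩
  have hfund : IsFundamentalMatrix A (wronskianMatrix y) (wronskianMatrix y)⁻¹ :=
    { map_deriv_eq := by rw [map_deriv_wronskianMatrix hy, companionMatrix_map]; rfl
      inv_mul := Matrix.nonsing_inv_mul _ hdet.isUnit }
  refine hasAmalgams_of_isFundamentalMatrix hk hfund ?_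
  have := hfund.isDiffStable_fieldAdjoin
  rw [← IntermediateField.toSubfield_inj, IntermediateField.top_toSubfield, ← top_le_iff, ← hgen]
  refine diffGen_le (fun m hm ↦ Subfield.subset_closure (.inl ⟨⟨m, hm⟩, rfl⟩)) ?_
  rintro _ ⟨i, rfl⟩
  exact Subfield.subset_closure (.inr (apply_mem_matrixEntries (wronskianMatrix y) ⟨0, i.pos⟩ i))

end LinearExtension

section FiniteExtension

variable {E : Type u} [Field E] {M K : Subfield E}

lemma finExt_iff_relfinrank_ne_zero : FinExt M K ↔ M ≤ K ∧ M.relfinrank K ≠ 0 := by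
  refine (exists_congr fun h ↦ ?_).trans exists_prop
  rw [Subfield.relfinrank_eq_finrank_of_le h, ← Nat.pos_iff_ne_zero]
  exact ⟨fun (_ : Module.Finite M (Subfield.extendScalars h)) ↦ Module.finrank_pos,
    Module.finite_of_finrank_pos (M := Subfield.extendScalars h)⟩

lemma finExt_map_iff {L : Type u} [Field L] (f : E →+* L) :
    FinExt (M.map f) (K.map f) ↔ FinExt M K := by
  simp only [finExt_iff_relfinrank_ne_zero, Subfield.relfinrank_map_map,
    (Subfield.gc_map_comap f).le_iff_le, Subfield.comap_map]

lemma finExt_toSubfield (S : IntermediateField M E) [h : FiniteDimensional M S] :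
    FinExt M S.toSubfield :=
  ⟨fun x hx ↦ S.algebraMap_mem ⟨x, hx⟩, h⟩

lemma toSubfield_adjoin (M : Subfield E) (s : Set E) :
    (IntermediateField.adjoin M s).toSubfield = M ⊔ Subfield.closure s := by
  have hM : Set.range (algebraMap M E) = M := Subtype.range_coe
  rw [IntermediateField.adjoin_toSubfield, Subfield.closure_union, hM, Subfield.closure_eq]

lemma finExt_sup_left (F : Subfield E) (h : FinExt M K) : FinExt (F ⊔ M) (F ⊔ K) := by
  obtain ⟨hle, hfin⟩ := h
  have : Module.Finite M (Subfield.extendScalars hle) := hfin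
  obtain ⟨s, hs⟩ := IntermediateField.essFiniteType_iff.mp
    (inferInstance : Algebra.EssFiniteType M (Subfield.extendScalars hle))
  have hsK : F ⊔ K = (IntermediateField.adjoin ↥(F ⊔ M) (s : Set E)).toSubfield := by
    rw [toSubfield_adjoin, sup_assoc, ← toSubfield_adjoin, hs, Subfield.extendScalars_toSubfield]
  let _ : Algebra M ↥(F ⊔ M) := (Subfield.inclusion le_sup_right).toAlgebra
  have : IsScalarTower M ↥(F ⊔ M) E := .of_algebraMap_eq fun _ ↦ rfl
  have hint (x : E) (hx : x ∈ s) : IsIntegral M x := IntermediateField.isIntegral_iff.mp <|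
    Algebra.IsIntegral.isIntegral
      (⟨x, hs ▸ IntermediateField.subset_adjoin M (s : Set E) hx⟩ : Subfield.extendScalars hle)
  have := IntermediateField.finiteDimensional_adjoin (K := ↥(F ⊔ M)) (S := (s : Set E))
    fun x hx ↦ (hint x hx).tower_top
  exact hsK ▸ finExt_toSubfield _

end FiniteExtension

section DifferentialSubfield

lemma LApply_map {E K : Type u} [Field E] [Field K] (f : E →+ K) {D : E → E} {D' : K → K}
    (hD : Function.Semiconj f D D') {n : ℕ} {a : Fin n → E} {b : Fin n → K}
    (hab : ∀ i x, f (a i * x) = b i * f x) (y : E) :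
    f (LApply D n a y) = LApply D' n b (f y) := by
  simp only [LApply, map_add, map_sum, hab, (hD.iterate_right _).eq]

variable {E K : Type u} [Field E] [Differential E] [Field K] [Differential K] {f : E →+* K}
  {M M' F k : Subfield E} {S : Set E}

lemma isDiffStable_map (hf : IsDiffHom f) [IsDiffStable M] : IsDiffStable (M.map f) where
  deriv_mem := by
    rintro _ ⟨x, hx, rfl⟩
    exact ⟨x′, IsDiffStable.deriv_mem (P := M) hx, hf x⟩

lemma isDiffStable_comap (hf : IsDiffHom f) (N : Subfield K) [IsDiffStable N] :
    IsDiffStable (N.comap f) where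
  deriv_mem {x} hx := (hf x ▸ IsDiffStable.deriv_mem (P := N) hx : f x′ ∈ N)

lemma isDiffStable_map_iff (hf : IsDiffHom f) : IsDiffStable (M.map f) ↔ IsDiffStable M :=
  ⟨fun _ ↦ Subfield.comap_map f M ▸ isDiffStable_comap hf (M.map f),
    fun _ ↦ isDiffStable_map hf⟩

lemma isDiffStable_fieldRange (hf : IsDiffHom f) : IsDiffStable f.fieldRange where
  deriv_mem := by
    rintro _ ⟨x, rfl⟩
    exact ⟨x′, hf x⟩

instance [hF : IsDiffStable F] [hM : IsDiffStable M] : IsDiffStable (F ⊔ M) := by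
  have hsup : F ⊔ M = Subfield.closure (F ∪ M) := by
    rw [Subfield.closure_union, Subfield.closure_eq, Subfield.closure_eq]
  rw [hsup]
  refine isDiffStable_closure ?_
  rintro x (hx | hx)
  · exact Subfield.subset_closure (.inl (hF.deriv_mem hx))
  · exact Subfield.subset_closure (.inr (hM.deriv_mem hx))

instance : IsDiffStable (diffGen Differential.deriv k S) where
  deriv_mem hx := Subfield.mem_sInf.mpr fun F hF ↦ hF.2.2 _ (Subfield.mem_sInf.mp hx F hF)

lemma le_diffGen : k ≤ diffGen Differential.deriv k S := le_sInf fun _ hF ↦ hF.1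

lemma subset_diffGen : S ⊆ diffGen Differential.deriv k S :=
  fun _ hx ↦ Subfield.mem_sInf.mpr fun _ hF ↦ hF.2.1 hx

lemma map_diffGen (hf : IsDiffHom f) :
    (diffGen Differential.deriv k S).map f = diffGen Differential.deriv (k.map f) (f '' S) := by
  refine le_antisymm (Subfield.map_le_iff_le_comap.mpr ?_) ?_
  · have := isDiffStable_comap hf (diffGen Differential.deriv (k.map f) (f '' S))
    exact diffGen_le (Subfield.map_le_iff_le_comap.mp le_diffGen)
      fun x hx ↦ subset_diffGen (Set.mem_image_of_mem f hx)
  · have := isDiffStable_map (M := diffGen Differential.deriv k S) hf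
    exact diffGen_le ((Subfield.gc_map_comap f).monotone_l le_diffGen)
      (Set.image_mono subset_diffGen)

lemma diffGen_sup_left [IsDiffStable F] :
    diffGen Differential.deriv (F ⊔ k) S = F ⊔ diffGen Differential.deriv k S :=
  le_antisymm (diffGen_le (sup_le_sup_left le_diffGen F)
      (subset_diffGen.trans (SetLike.coe_subset_coe.mpr le_sup_right)))
    (sup_le (le_sup_left.trans le_diffGen) (diffGen_le (le_sup_right.trans le_diffGen)
      subset_diffGen))

end DifferentialSubfield

section PicardVessiotStep

variable {E K : Type u} [Field E] [Field K] {f : E →+* K} {M M' F : Subfield E} {n : ℕ}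
  {a : Fin n → E}

lemma map_mem_map_iff {x : E} : f x ∈ M.map f ↔ x ∈ M := by
  rw [← Subfield.mem_comap, Subfield.comap_map]

lemma exists_forall_mem_map_iff {ι : Type*} {P : (ι → K) → Prop} :
    (∃ y : ι → K, (∀ i, y i ∈ M.map f) ∧ P y) ↔ ∃ y : ι → E, (∀ i, y i ∈ M) ∧ P (f ∘ y) := by
  refine ⟨fun ⟨y, hy, hP⟩ ↦ ?_, fun ⟨y, hy, hP⟩ ↦ ⟨f ∘ y, fun i ↦ ⟨y i, hy i, rfl⟩, hP⟩⟩
  choose z hz hzy using hy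
  exact ⟨z, hz, (funext hzy : f ∘ z = y) ▸ hP⟩

variable [Differential E] [Differential K]

lemma IsDiffHom.deriv_eq_zero_iff (hf : IsDiffHom f) {x : E} : (f x)′ = 0 ↔ x′ = 0 := by
  rw [← hf, map_eq_zero]

lemma IsDiffHom.forall_mem_map_iff (hf : IsDiffHom f) {N : Subfield K} :
    (∀ x ∈ M.map f, x′ = 0 → x ∈ N) ↔ ∀ x ∈ M, x′ = 0 → f x ∈ N := by
  refine ⟨fun h x hx hx' ↦ h _ ⟨x, hx, rfl⟩ (hf.deriv_eq_zero_iff.mpr hx'), ?_⟩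
  rintro h _ ⟨x, hx, rfl⟩ hx'
  exact h x hx (hf.deriv_eq_zero_iff.mp hx')

lemma IsDiffHom.LApply_eq_zero_iff (hf : IsDiffHom f) {y : E} :
    LApply Differential.deriv n (f ∘ a) (f y) = 0 ↔ LApply Differential.deriv n a y = 0 := by
  rw [← map_eq_zero f]
  exact iff_of_eq (congrArg (· = 0) (LApply_map (f : E →+ K) hf (fun i x ↦ map_mul f _ _) y).symm)

lemma isPVWith_map_iff (hf : IsDiffHom f) :
    IsPVWith Differential.deriv (M.map f) (M'.map f) n (f ∘ a) ↔
      IsPVWith Differential.deriv M M' n a := by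
  have hstable (N : Subfield E) : (∀ x ∈ N.map f, x′ ∈ N.map f) ↔ ∀ x ∈ N, x′ ∈ N :=
    ⟨fun h x ↦ ((isDiffStable_map_iff hf).mp ⟨h _⟩).deriv_mem,
      fun h x ↦ ((isDiffStable_map_iff hf).mpr ⟨h _⟩).deriv_mem⟩
  have hind (y : Fin n → E) :
      (∀ c : Fin n → K, (∀ i, c i ∈ M.map f ∧ (c i)′ = 0) → ∑ i, c i * f (y i) = 0 →
        ∀ i, c i = 0) ↔
      ∀ c : Fin n → E, (∀ i, c i ∈ M ∧ (c i)′ = 0) → ∑ i, c i * y i = 0 → ∀ i, c i = 0 := by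
    refine ⟨fun h c hc hsum i ↦ ?_, fun h c hc hsum i ↦ ?_⟩
    · refine (map_eq_zero f).mp (h (f ∘ c) (fun i ↦ ⟨⟨c i, (hc i).1, rfl⟩,
        hf.deriv_eq_zero_iff.mpr (hc i).2⟩) ?_ i)
      simpa only [map_sum, map_mul, map_zero, Function.comp_apply] using congrArg f hsum
    · choose b hb hbc using fun i ↦ (hc i).1
      obtain rfl : f ∘ b = c := funext hbc
      refine (map_eq_zero f).mpr (h b (fun i ↦ ⟨hb i, hf.deriv_eq_zero_iff.mp (hc i).2⟩)
        (f.injective ?_) i)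
      simpa only [map_sum, map_mul, map_zero, Function.comp_apply] using hsum
  have hgen (y : Fin n → E) : diffGen Differential.deriv (M.map f) (Set.range (f ∘ y)) = M'.map f ↔
      diffGen Differential.deriv M (Set.range y) = M' := by
    rw [Set.range_comp, ← map_diffGen hf,
      (Function.LeftInverse.injective (g := Subfield.comap f) (Subfield.comap_map f)).eq_iff]
  simp only [IsPVWith, exists_forall_mem_map_iff, hf.forall_mem_map_iff, map_mem_map_iff, hstable,
    hf.LApply_eq_zero_iff, hind, hgen, Subfield.map_le_iff_le_comap, Subfield.comap_map,
    Function.comp_apply]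

lemma exists_isPVWith_map_iff (hf : IsDiffHom f) :
    (∃ a, IsPVWith Differential.deriv (M.map f) (M'.map f) n a) ↔
      ∃ a, IsPVWith Differential.deriv M M' n a := by
  refine ⟨fun ⟨a, h⟩ ↦ ?_, fun ⟨a, h⟩ ↦ ⟨f ∘ a, (isPVWith_map_iff hf).mpr h⟩⟩
  choose b _ hba using h.2.2.2.2.1
  obtain rfl : f ∘ b = a := funext hba
  exact ⟨b, (isPVWith_map_iff hf).mp h⟩

lemma isPVWith_sup_left [hF : IsDiffStable F] (hcon : ∀ x ∈ F ⊔ M', x′ = 0 → x ∈ M)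
    (h : IsPVWith Differential.deriv M M' n a) :
    IsPVWith Differential.deriv (F ⊔ M) (F ⊔ M') n a := by
  obtain ⟨hle, hM, hM', -, ha, y, hy, hLy, hind, hgen⟩ := h
  have : IsDiffStable M := ⟨hM _⟩
  have : IsDiffStable M' := ⟨hM' _⟩
  have hle' : F ⊔ M ≤ F ⊔ M' := sup_le_sup_left hle F
  exact ⟨hle', fun _ ↦ IsDiffStable.deriv_mem, fun _ ↦ IsDiffStable.deriv_mem,
    fun x hx hx' ↦ le_sup_right (a := F) (hcon x hx hx'), fun i ↦ le_sup_right (a := F) (ha i), y,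
    fun i ↦ le_sup_right (a := F) (hy i), hLy,
    fun c hc ↦ hind c fun i ↦ ⟨hcon _ (hle' (hc i).1) (hc i).2, (hc i).2⟩,
    by rw [diffGen_sup_left, hgen]⟩

end PicardVessiotStep

section Tower

variable {E K : Type u} [Field E] [Differential E] [Field K] [Differential K] {f : E →+* K}
  {M M' : Subfield E} {d : ℕ}

/-- A step of a `d`-solvable tower of differential subfields: a finite extension or a
Picard–Vessiot extension of order at most `d`. -/
structure Step (d : ℕ) (M M' : Subfield E) : Prop where
  isDiffStable : IsDiffStable M'
  finExt_or_isPVWith : FinExt M M' ∨ ∃ n ≤ d, ∃ a : Fin n → E, IsPVWith Differential.deriv M M' n a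

namespace Step

lemma le (h : Step d M M') : M ≤ M' := h.finExt_or_isPVWith.elim (·.1) fun ⟨_, _, _, h⟩ ↦ h.1

lemma iff_and : Step d M M' ↔ IsDiffStable M' ∧
    (FinExt M M' ∨ ∃ n ≤ d, ∃ a : Fin n → E, IsPVWith Differential.deriv M M' n a) :=
  ⟨fun ⟨h₁, h₂⟩ ↦ ⟨h₁, h₂⟩, fun ⟨h₁, h₂⟩ ↦ ⟨h₁, h₂⟩⟩

lemma map_iff (hf : IsDiffHom f) : Step d (M.map f) (M'.map f) ↔ Step d M M' := by
  simp only [iff_and, isDiffStable_map_iff hf, finExt_map_iff, exists_isPVWith_map_iff hf]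

lemma sup_left (F : Subfield E) [IsDiffStable F] (hcon : ∀ x : E, x′ = 0 → x ∈ M)
    (h : Step d M M') : Step d (F ⊔ M) (F ⊔ M') where
  isDiffStable := have := h.isDiffStable; inferInstance
  finExt_or_isPVWith := h.finExt_or_isPVWith.imp (finExt_sup_left F) fun ⟨n, hn, a, h⟩ ↦
    ⟨n, hn, a, isPVWith_sup_left (fun x _ ↦ hcon x) h⟩

lemma hasAmalgams_subtype [CharZero E] [IsDiffStable M] [IsAlgClosed (constants M)]
    (h : Step d M ⊤) : HasAmalgams M.subtype := by
  obtain hfin | ⟨n, -, a, hPV⟩ := h.finExt_or_isPVWith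
  · have hfin := (finExt_iff_relfinrank_ne_zero.mp hfin).2
    rw [Subfield.relfinrank_top_right] at hfin
    have := Module.finite_of_finrank_pos (Nat.pos_of_ne_zero hfin)
    exact hasAmalgams_subtype_of_finite
  · exact hasAmalgams_subtype_of_isPVWith hPV

end Step

lemma HasAmalgams.of_fieldRange [CharZero E] [IsAlgClosed (constants E)] (hf : IsDiffHom f)
    [IsDiffStable f.fieldRange]
    (h : ∀ [IsAlgClosed (constants f.fieldRange)], HasAmalgams f.fieldRange.subtype) :
    HasAmalgams f := by
  have hrange : IsDiffHom f.rangeRestrictField := fun x ↦ Subtype.ext (hf x)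
  have hamalg : HasAmalgams f.rangeRestrictField :=
    .of_surjective hrange f.rangeRestrictField_bijective.2
  have := (hamalg.isConservative hrange).isAlgClosed_constants
  exact h.comp hamalg

lemma Step.hasAmalgams_inclusion [CharZero E] [IsDiffStable M] [IsDiffStable M']
    [IsAlgClosed (constants M)] (h : Step d M M') : HasAmalgams (Subfield.inclusion h.le) := by
  have hincl : IsDiffHom (Subfield.inclusion h.le) := fun _ ↦ rfl
  have := isDiffStable_fieldRange hincl
  refine .of_fieldRange hincl (Step.hasAmalgams_subtype (d := d) ?_)
  rw [← map_iff (f := M'.subtype) fun _ ↦ rfl, RingHom.map_fieldRange, ← RingHom.fieldRange_eq_map,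
    Subfield.fieldRange_subtype]
  exact (Subfield.fieldRange_subtype M).symm ▸ h

/-- Towers of steps, the building blocks of `d`-solvable extensions. -/
def Tower (d : ℕ) : Subfield E → Subfield E → Prop := Relation.ReflTransGen (Step d)

namespace Tower

lemma le (h : Tower d M M') : M ≤ M' := by
  induction h with
  | refl => exact le_rfl
  | tail _ hstep ih => exact ih.trans hstep.le

lemma isDiffStable [IsDiffStable M] (h : Tower d M M') : IsDiffStable M' := by
  cases h with
  | refl => assumption
  | tail _ hstep => exact hstep.isDiffStable

lemma map (hf : IsDiffHom f) (h : Tower d M M') : Tower d (M.map f) (M'.map f) :=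
  h.lift (Subfield.map f) fun _ _ ↦ (Step.map_iff hf).mpr

lemma comap (hf : IsDiffHom f) {N : Subfield K} (h : Tower d (M.map f) N) (hN : N ≤ f.fieldRange) :
    Tower d M (N.comap f) := by
  induction h with
  | refl => exact (Subfield.comap_map f M).symm ▸ .refl
  | @tail N₁ N₂ _ hstep ih =>
    have hN₁ : N₁ ≤ f.fieldRange := hstep.le.trans hN
    refine (ih hN₁).tail ((Step.map_iff hf).mp ?_)
    rwa [Subfield.map_comap_eq_self hN₁, Subfield.map_comap_eq_self hN]

lemma sup_left (F : Subfield E) [IsDiffStable F] (hcon : ∀ x : E, x′ = 0 → x ∈ M)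
    (h : Tower d M M') : Tower d (F ⊔ M) (F ⊔ M') := by
  induction h with
  | refl => exact .refl
  | tail h hstep ih => exact ih.tail (hstep.sup_left F fun x hx ↦ le h (hcon x hx))

lemma hasAmalgams_subtype [CharZero E] (h : Tower d M ⊤) :
    ∀ [IsDiffStable M] [IsAlgClosed (constants M)], HasAmalgams M.subtype := by
  induction h using Relation.ReflTransGen.head_induction_on with
  | refl =>
    intro _ _
    exact .of_surjective (fun _ ↦ rfl) fun x ↦ ⟨⟨x, Subfield.mem_top x⟩, rfl⟩
  | head hstep _ ih =>
    intro _ _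
    have := hstep.isDiffStable
    have hincl := hstep.hasAmalgams_inclusion
    have := (hincl.isConservative fun _ ↦ rfl).isAlgClosed_constants
    exact ih.comp hincl

lemma hasAmalgams [CharZero E] [IsAlgClosed (constants E)] (hf : IsDiffHom f)
    (h : Tower d f.fieldRange ⊤) : HasAmalgams f := by
  have := isDiffStable_fieldRange hf
  have : CharZero K := charZero_of_injective_ringHom f.injective
  exact .of_fieldRange hf h.hasAmalgams_subtype

end Tower

end Tower

section Solvable

lemma reflTransGen_iff_exists_relSeries {α : Type*} {r : α → α → Prop} {a b : α} :
    Relation.ReflTransGen r a b ↔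
      ∃ s : RelSeries {p : α × α | r p.1 p.2}, s.head = a ∧ s.last = b := by
  constructor
  · intro h
    induction h with
    | refl => exact ⟨.singleton _ a, rfl, rfl⟩
    | tail _ hstep ih =>
      obtain ⟨s, rfl, rfl⟩ := ih
      exact ⟨s.snoc _ hstep, s.head_snoc _ _, s.last_snoc _ _⟩
  · rintro ⟨s, rfl, rfl⟩
    have h (i : Fin (s.length + 1)) : Relation.ReflTransGen r s.head (s i) := by
      induction i using Fin.induction with
      | zero => exact .refl
      | succ i ih => exact ih.tail (s.step i)
    exact h (Fin.last _)

lemma map_comap_subtype {E : Type u} [Field E] {k F : Subfield E} (h : k ≤ F) :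
    (k.comap F.subtype).map F.subtype = k :=
  Subfield.map_comap_eq_self (F.fieldRange_subtype.symm ▸ h)

instance (Ω : DFld.{u}) : Differential Ω.carrier where
  deriv := .mk' (AddMonoidHom.mk' Ω.deriv Ω.deriv_add).toIntLinearMap fun x y ↦ by
    change Ω.deriv (x * y) = x * Ω.deriv y + y * Ω.deriv x
    rw [Ω.deriv_mul]
    ring

variable {E : Type u} [Field E] [Differential E] {k F F₁ F₂ : Subfield E} {d : ℕ}

lemma isDSolvable_iff [CharZero E] [hk : IsDiffStable k] :
    IsDSolvable Differential.deriv k F d ↔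
      ∃ (Ω : Type u) (_ : Field Ω) (_ : Differential Ω) (j : E →+* Ω), IsDiffHom j ∧
        ∃ T, Tower d (k.map j) T ∧ F.map j ≤ T := by
  constructor
  · rintro ⟨Ω, j, hj, r, T, h₀, hF, hT, hstep⟩
    exact ⟨Ω.carrier, _, inferInstance, j, hj, T (Fin.last r),
      reflTransGen_iff_exists_relSeries.mpr ⟨⟨r, T, fun i ↦ ⟨⟨hT _ _⟩, hstep i⟩⟩, h₀, rfl⟩, hF⟩
  · rintro ⟨Ω, _, _, j, hj, T, hT, hF⟩
    obtain ⟨s, h₀, rfl⟩ := reflTransGen_iff_exists_relSeries.mp hT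
    have : CharZero Ω := charZero_of_injective_ringHom j.injective
    refine ⟨⟨Ω, Differential.deriv, map_add _, fun x y ↦ ?_⟩, j, hj, s.length, s, h₀, hF,
      fun i x hx ↦ ?_, fun i ↦ (s.step i).finExt_or_isPVWith⟩
    · rw [Derivation.leibniz, smul_eq_mul, smul_eq_mul]
      ring
    · have hi : IsDiffStable (s i) := i.cases
        ((h₀ ▸ isDiffStable_map hj : IsDiffStable s.head)) fun i ↦ (s.step i).isDiffStable
      exact hi.deriv_mem hx

lemma isDSolvable_self [CharZero E] [IsDiffStable k] : IsDSolvable Differential.deriv k k d :=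
  isDSolvable_iff.mpr ⟨E, _, _, .id E, fun _ ↦ rfl, _, .refl, le_rfl⟩

lemma isDSolvable_mono (hF : F₁ ≤ F₂) (h : IsDSolvable Differential.deriv k F₂ d) :
    IsDSolvable Differential.deriv k F₁ d := by
  obtain ⟨Ω, j, hj, r, T, h₀, hT, h⟩ := h
  exact ⟨Ω, j, hj, r, T, h₀, ((Subfield.gc_map_comap j).monotone_l hF).trans hT, h⟩

lemma isDSolvable_of_map {K : Type u} [Field K] [Differential K] {f : E →+* K} (hf : IsDiffHom f)
    (h : IsDSolvable Differential.deriv (k.map f) (F.map f) d) :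
    IsDSolvable Differential.deriv k F d := by
  obtain ⟨Ω, j, hj, r, T, h₀, hT, h⟩ := h
  rw [Subfield.map_map] at h₀ hT
  exact ⟨Ω, j.comp f, fun x ↦ (congrArg j (hf x)).trans (hj (f x)), r, T, h₀, hT, h⟩

lemma isDSolvable_map_iff {K : Type u} [Field K] [Differential K] {σ : E ≃+* K}
    (hσ : IsDiffHom (σ : E →+* K)) :
    IsDSolvable Differential.deriv (k.map (σ : E →+* K)) (F.map (σ : E →+* K)) d ↔
      IsDSolvable Differential.deriv k F d := by
  have hσ' : IsDiffHom (σ.symm : K →+* E) := fun x ↦ σ.injective <| by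
    simpa using (hσ (σ.symm x)).symm
  refine ⟨isDSolvable_of_map hσ, fun h ↦ isDSolvable_of_map hσ' ?_⟩
  have hid : (σ.symm : K →+* E).comp (σ : E →+* K) = .id E := RingHom.ext σ.symm_apply_apply
  have hmap (M : Subfield E) : (M.map (σ : E →+* K)).map (σ.symm : K →+* E) = M := by
    rw [Subfield.map_map, hid]
    exact SetLike.coe_injective (Set.image_id _)
  rwa [hmap, hmap]

lemma isConservative_subtype [IsDiffStable k] (h : constants E ≤ k) : IsConservative k.subtype :=
  ⟨fun _ ↦ rfl, fun {x} hx ↦ ⟨⟨x, h (mem_constants.mpr hx)⟩, rfl⟩⟩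

lemma exists_tower_top_of_isDSolvable [CharZero E] [IsDiffStable k] [IsDiffStable F] (hkF : k ≤ F)
    (h : IsDSolvable Differential.deriv k F d) :
    ∃ (Ω : Type u) (_ : Field Ω) (_ : Differential Ω) (j : F →+* Ω), IsDiffHom j ∧
      Tower d ((k.comap F.subtype).map j) ⊤ := by
  obtain ⟨Ω, _, _, j, hj, T, hT, hF⟩ := isDSolvable_iff.mp h
  have := isDiffStable_map (M := k) hj
  have := hT.isDiffStable
  let i : F →+* T := (j.comp F.subtype).codRestrict T fun x ↦ hF ⟨x, x.2, rfl⟩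
  have hi : T.subtype.comp i = j.comp F.subtype := rfl
  refine ⟨T, _, _, i, fun x ↦ Subtype.ext (hj x), ?_⟩
  have htop : T.comap T.subtype = ⊤ := top_unique fun x _ ↦ x.2
  rw [← htop]
  refine Tower.comap (fun _ ↦ rfl) ?_ T.fieldRange_subtype.ge
  rwa [Subfield.map_map, hi, ← Subfield.map_map, map_comap_subtype hkF]

lemma hasAmalgams_of_tower {Ω : Type u} [Field Ω] [Differential Ω] {j : E →+* Ω} (hj : IsDiffHom j)
    [CharZero E] [IsAlgClosed (constants E)] [IsDiffStable k] (hk : constants E ≤ k)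
    (h : Tower d (k.map j) ⊤) : HasAmalgams j := by
  have : IsAlgClosed (constants k) :=
    (isConservative_subtype hk).isAlgClosed_constants_iff.mpr inferInstance
  have hrange : (j.comp k.subtype).fieldRange = k.map j := by
    rw [← RingHom.map_fieldRange, k.fieldRange_subtype]
  have hjk : IsDiffHom (j.comp k.subtype) := fun x ↦ hj x
  have hcons := (Tower.hasAmalgams hjk (hrange ▸ h)).isConservative hjk
  have := isDiffStable_fieldRange hj
  refine Tower.hasAmalgams (d := d) hj ?_
  have hsup := h.sup_left j.fieldRange fun x hx ↦ hrange ▸ hcons.mem_range hx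
  rwa [sup_top_eq, sup_eq_left.mpr (j.fieldRange_eq_map ▸ (Subfield.gc_map_comap j).monotone_l
    le_top)] at hsup

lemma exists_tower_of_isConservative [CharZero E] [IsAlgClosed (constants E)] [IsDiffStable k]
    [IsDiffStable F] (hk : constants E ≤ k) (hkF : k ≤ F)
    (h : IsDSolvable Differential.deriv k F d) {K : Type u} [Field K] [Differential K]
    {e : E →+* K} (he : IsConservative e) :
    ∃ (K' : Type u) (_ : Field K') (_ : Differential K') (α : K →+* K'), IsConservative α ∧
      ∃ T, Tower d (k.map (α.comp e)) T ∧ F.map (α.comp e) ≤ T := by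
  have : CharZero K := charZero_of_injective_ringHom e.injective
  have := he.isAlgClosed_constants
  have : IsAlgClosed (constants F) :=
    (isConservative_subtype (hk.trans hkF)).isAlgClosed_constants_iff.mpr inferInstance
  have := isDiffStable_comap (f := F.subtype) (fun _ ↦ rfl) k
  obtain ⟨Ω, _, _, j, hj, hT⟩ := exists_tower_top_of_isDSolvable hkF h
  have hkF' : constants F ≤ k.comap F.subtype := fun x hx ↦
    hk (mem_constants.mpr (congrArg Subtype.val (mem_constants.mp hx)))
  obtain ⟨K', _, _, α, β, hα, hβ, hαβ⟩ := hasAmalgams_of_tower hj hkF' hT K (e.comp F.subtype)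
    (he.isDiffHom.comp fun _ ↦ rfl)
  refine ⟨K', _, _, α, hα, (⊤ : Subfield Ω).map β, ?_, ?_⟩
  · have hT' := hT.map hβ
    rwa [Subfield.map_map, ← hαβ, ← RingHom.comp_assoc, ← Subfield.map_map,
      map_comap_subtype hkF] at hT'
  · rintro _ ⟨x, hx, rfl⟩
    exact ⟨j ⟨x, hx⟩, Subfield.mem_top _, (RingHom.congr_fun hαβ ⟨x, hx⟩).symm⟩

lemma isDSolvable_sup [CharZero E] [IsAlgClosed (constants E)] [IsDiffStable k]
    [IsDiffStable F₁] [IsDiffStable F₂] (hk : constants E ≤ k) (hkF₁ : k ≤ F₁) (hkF₂ : k ≤ F₂)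
    (h₁ : IsDSolvable Differential.deriv k F₁ d) (h₂ : IsDSolvable Differential.deriv k F₂ d) :
    IsDSolvable Differential.deriv k (F₁ ⊔ F₂) d := by
  obtain ⟨K₁, _, _, α₁, hα₁, T₁, hT₁, hF₁⟩ := exists_tower_of_isConservative hk hkF₁ h₁ .id
  rw [RingHom.comp_id] at hT₁ hF₁
  obtain ⟨K₂, _, _, α₂, hα₂, T₂, hT₂, hF₂⟩ := exists_tower_of_isConservative hk hkF₂ h₂ hα₁
  have hα := hα₂.comp hα₁
  have hT₁' : Tower d (k.map (α₂.comp α₁)) (T₁.map α₂) :=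
    Subfield.map_map k α₂ α₁ ▸ hT₁.map hα₂.isDiffHom
  have := isDiffStable_map (M := k) hα.isDiffHom
  have := hT₁'.isDiffStable
  have hsup := hT₂.sup_left (T₁.map α₂) fun x hx ↦ by
    obtain ⟨c, hc, rfl⟩ := hα.exists_constant hx
    exact ⟨c, hk (mem_constants.mpr hc), rfl⟩
  rw [sup_eq_left.mpr hT₁'.le] at hsup
  refine isDSolvable_iff.mpr ⟨K₂, _, _, α₂.comp α₁, hα.isDiffHom, _, hT₁'.trans hsup, ?_⟩
  rw [Subfield.map_sup]
  exact sup_le_sup (Subfield.map_map F₁ α₂ α₁ ▸ (Subfield.gc_map_comap α₂).monotone_l hF₁) hF₂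

end Solvable

section Solutions

variable {E : Type u} [Field E] [Differential E] {k : Subfield E} {n d : ℕ} {a : Fin n → E}
  {c u v : E}

lemma LApply_add : LApply Differential.deriv n a (u + v) =
    LApply Differential.deriv n a u + LApply Differential.deriv n a v := by
  simp only [LApply, iterate_map_add, mul_add, Finset.sum_add_distrib]
  ring

lemma LApply_constant_mul (hc : c ∈ constants E) :
    LApply Differential.deriv n a (c * v) = c * LApply Differential.deriv n a v := by
  refine (LApply_map (AddMonoidHom.mulLeft c) (fun x ↦ ?_) (fun i x ↦ ?_) v).symm
  · simp [mem_constants.mp hc]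
  · exact mul_left_comm c (a i) x

lemma diffGen_singleton_add_le : diffGen Differential.deriv k {u + v} ≤
    diffGen Differential.deriv k {u} ⊔ diffGen Differential.deriv k {v} :=
  diffGen_le (le_diffGen.trans le_sup_left) <| Set.singleton_subset_iff.mpr <|
    add_mem (le_sup_left (b := diffGen _ k {v}) (subset_diffGen rfl))
      (le_sup_right (a := diffGen _ k {u}) (subset_diffGen rfl))

lemma diffGen_singleton_mul_le (hc : c ∈ k) :
    diffGen Differential.deriv k {c * v} ≤ diffGen Differential.deriv k {v} :=
  diffGen_le le_diffGen <| Set.singleton_subset_iff.mpr <|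
    mul_mem (le_diffGen hc) (subset_diffGen rfl)

/-- The solutions `y` of a linear differential equation such that `k⟨y⟩` is `d`-solvable over
`k`; the operator is given by its lower-order coefficients `a`. -/
def dSolvableSolutions (k : Subfield E) (a : Fin n → E) (d : ℕ) : Set E :=
  {y | LApply Differential.deriv n a y = 0 ∧
    IsDSolvable Differential.deriv k (diffGen Differential.deriv k {y}) d}

lemma constant_mul_mem_dSolvableSolutions (hk : constants E ≤ k) (hc : c ∈ constants E)
    (hv : v ∈ dSolvableSolutions k a d) : c * v ∈ dSolvableSolutions k a d :=
  ⟨by rw [LApply_constant_mul hc, hv.1, mul_zero],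
    isDSolvable_mono (diffGen_singleton_mul_le (hk hc)) hv.2⟩

lemma apply_mem_dSolvableSolutions_iff {σ : E ≃+* E} (hσ : IsDiffHom (σ : E →+* E))
    (hk : ∀ x ∈ k, σ x = x) (ha : ∀ i, a i ∈ k) :
    σ v ∈ dSolvableSolutions k a d ↔ v ∈ dSolvableSolutions k a d := by
  have hka : σ ∘ a = a := funext fun i ↦ hk _ (ha i)
  have hkk : k.map (σ : E →+* E) = k := SetLike.coe_injective (Set.EqOn.image_eq_self hk)
  have hgen : (diffGen Differential.deriv k {v}).map (σ : E →+* E) =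
      diffGen Differential.deriv k {σ v} := by
    rw [map_diffGen hσ, hkk, Set.image_singleton, RingEquiv.coe_toRingHom]
  refine and_congr ?_ ?_
  · simpa [hka] using hσ.LApply_eq_zero_iff (a := a) (y := v)
  · rw [← isDSolvable_map_iff (F := diffGen _ k {v}) hσ, hkk, hgen]

variable [CharZero E] [IsDiffStable k]

lemma zero_mem_dSolvableSolutions : 0 ∈ dSolvableSolutions k a d := by
  refine ⟨?_, isDSolvable_mono (diffGen_le le_rfl ?_) isDSolvable_self⟩
  · simpa using LApply_constant_mul (a := a) (v := 0) (zero_mem (constants E))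
  · exact Set.singleton_subset_iff.mpr (zero_mem k)

lemma add_mem_dSolvableSolutions [IsAlgClosed (constants E)] (hk : constants E ≤ k)
    (hu : u ∈ dSolvableSolutions k a d) (hv : v ∈ dSolvableSolutions k a d) :
    u + v ∈ dSolvableSolutions k a d :=
  ⟨by rw [LApply_add, hu.1, hv.1, add_zero], isDSolvable_mono diffGen_singleton_add_le
    (isDSolvable_sup hk le_diffGen le_diffGen hu.2 hv.2)⟩

end Solutions

end PicardVessiot

open PicardVessiot

theorem stmt15_general {E : Type u} [Field E] [CharZero E] (D : Derivation ℤ E E)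
    (k : Subfield E) (hk : ∀ x ∈ k, D x ∈ k)
    (hC : IsAlgClosed ↥(constantsOf D k)) (hcon : ∀ x : E, D x = 0 → x ∈ k)
    (n : ℕ) (a : Fin n → E) (ha : ∀ i, a i ∈ k) (d : ℕ)
    (V : Set E)
    (hV : V = {y : E | LApply (⇑D) n a y = 0 ∧ IsDSolvable (⇑D) k (diffGen (⇑D) k {y}) d}) :
    (0 ∈ V) ∧
    (∀ u ∈ V, ∀ v ∈ V, u + v ∈ V) ∧
    (∀ v ∈ V, -v ∈ V) ∧
    (∀ c ∈ constantsOf D k, ∀ v ∈ V, c * v ∈ V) ∧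
    ∀ σ : E ≃+* E, (∀ x ∈ k, σ x = x) → (∀ x : E, σ (D x) = D (σ x)) → σ '' V = V := by
  subst hV
  let _ : Differential E := ⟨D⟩
  have : IsDiffStable k := ⟨hk _⟩
  have hkE : constants E ≤ k := fun x hx ↦ hcon x (mem_constants.mp hx)
  have hconst : constantsOf D k = constants E :=
    SetLike.ext fun x ↦ ⟨fun h ↦ mem_constants.mpr h.2, fun h ↦ ⟨hkE h, mem_constants.mp h⟩⟩
  have : IsAlgClosed (constants E) := hconst ▸ hC
  change 0 ∈ dSolvableSolutions k a d ∧ _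
  refine ⟨zero_mem_dSolvableSolutions, fun u hu v hv ↦ add_mem_dSolvableSolutions hkE hu hv,
    fun v hv ↦ ?_,
    fun c hc v hv ↦ constant_mul_mem_dSolvableSolutions hkE (hconst ▸ hc) hv, fun σ hσk hσ ↦ ?_⟩
  · rw [← neg_one_mul]
    exact constant_mul_mem_dSolvableSolutions hkE (neg_mem (one_mem _)) hv
  · have hpreimage : σ ⁻¹' dSolvableSolutions k a d = dSolvableSolutions k a d :=
      Set.ext fun v ↦ apply_mem_dSolvableSolutions_iff hσ hσk ha
    exact (congrArg (σ '' ·) hpreimage).symm.trans (Set.image_preimage_eq _ σ.surjective)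

/-- Let `E` be a Picard–Vessiot extension of `k` for a monic operator `L`
and `d ≥ 1`. The set `V` of solutions `y ∈ E` of `L(y) = 0` such that `k⟨y⟩` is `d`-solvable
over `k` is a vector space over the constants `C` of `k`, stable under every differential
automorphism of `E` over `k`. -/
theorem stmt15 {E : Type u} [Field E] [CharZero E] (D : Derivation ℤ E E)
    (k : Subfield E) (hk : ∀ x ∈ k, D x ∈ k)
    (hC : IsAlgClosed ↥(constantsOf D k))
    (n : ℕ) (a : Fin n → E) (hPV : IsPVWith (⇑D) k ⊤ n a)
    (d : ℕ) (hd : 0 < d)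
    (V : Set E)
    (hV : V = {y : E | LApply (⇑D) n a y = 0 ∧ IsDSolvable (⇑D) k (diffGen (⇑D) k {y}) d}) :
    (0 ∈ V) ∧
    (∀ u ∈ V, ∀ v ∈ V, u + v ∈ V) ∧
    (∀ v ∈ V, -v ∈ V) ∧
    (∀ c ∈ constantsOf D k, ∀ v ∈ V, c * v ∈ V) ∧
    ∀ σ : E ≃+* E, (∀ x ∈ k, σ x = x) → (∀ x : E, σ (D x) = D (σ x)) → σ '' V = V := by
  exact stmt15_general D k hk hC (fun x ↦ hPV.2.2.2.1 x (Subfield.mem_top x)) n a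
    hPV.2.2.2.2.1 d V hV
end

section
/- Let C be an algebraically closed field of characteristic zero, regarded as a differential field with zero derivation, let E be a Picard–Vessiot extension of C for some monic linear differential operator over C, and let K be an intermediate differential field, C ⊆ K ⊆ E. Then there exist l ≥ 0 and elements y₁,…,y_l ∈ K such that K = C(y₁,…,y_l) (the subfield generated by C and y₁,…,y_l), yᵢ′/yᵢ ∈ C for all i = 2,…,l, and either y₁′ = 1 or y₁′/y₁ ∈ C. -/
universe u

/-!
Since `c` consists of constants, the characteristic polynomial of the operator splits over `c` and
the solutions lie in a field generated over `c` by an element `x` with `x′ = 1` (at most one is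
needed, as two of them differ by a constant) and a finitely generated group `Γ` of exponentials,
i.e. of units whose logarithmic derivative lies in `c`: a solution belonging to the root `r` is an
exponential `e` with `e′ = r e` times a polynomial in `x`.

If `K` is a differential subfield of `c(x, Γ)`, then elements of `Γ` that are independent modulo
`K ∩ Γ` are linearly independent over `K`, as for characters in Dedekind's lemma. Comparing
coefficients in a quotient of two linear combinations of elements of `Γ` gives `K ∩ c(Γ) = c` when
`K ∩ Γ ⊆ c`, and the same applies over every base `F ⊆ K` in place of `c`. If `x ∉ K`, the
differential simplicity of `K[x]` shows that `x` is transcendental over `K` and that `K(x)` contains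
no exponentials outside `K`. Applied to `F = c(K ∩ ({x} ∪ Γ))` this yields `F = K` if `x ∈ K`, and
otherwise `F(x) = K(x)`, hence again `F = K`. Finally `K ∩ Γ` is finitely generated because `Γ` is.
-/

open Polynomial IntermediateField
open Differential (implicitDeriv ContainConstants)
open scoped Differential

section Constants

variable {F E : Type*} [Field F] [Field E] [Differential E] [Algebra F E] [ContainConstants F E]

theorem mem_range_of_logDeriv_eq {e f : E} (he : e ≠ 0) (hf : f ∈ (algebraMap F E).range)
    (hf₀ : f ≠ 0) (h : Differential.logDeriv e = Differential.logDeriv f) :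
    e ∈ (algebraMap F E).range := by
  have hconst : (e / f)′ = 0 := by
    rw [← Differential.logDeriv_eq_zero, Differential.logDeriv_div _ _ he hf₀, h, sub_self]
  simpa [hf₀] using mul_mem (mem_range_of_deriv_eq_zero F hconst) hf

end Constants

section Primitive

variable {F : Type*} [Field F] [Differential F]

theorem coeff_implicitDeriv_one (p : F[X]) (n : ℕ) :
    (implicitDeriv 1 p).coeff n = (p.coeff n)′ + p.coeff (n + 1) * (n + 1) := by
  simp [implicitDeriv, coeff_derivative]

theorem coeff_natDegree_implicitDeriv_one (p : F[X]) :
    (implicitDeriv 1 p).coeff p.natDegree = p.leadingCoeff′ := by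
  rw [coeff_implicitDeriv_one, coeff_eq_zero_of_natDegree_lt p.natDegree.lt_succ_self, zero_mul,
    add_zero, leadingCoeff]

theorem degree_implicitDeriv_one_lt {p : F[X]} (hp : p.Monic) :
    (implicitDeriv 1 p).degree < p.degree := by
  rw [degree_eq_natDegree hp.ne_zero, degree_lt_iff_coeff_zero]
  intro n hn
  obtain rfl | hn := hn.eq_or_lt
  · rw [coeff_natDegree_implicitDeriv_one, hp, Derivation.map_one_eq_zero]
  · rw [coeff_implicitDeriv_one, coeff_eq_zero_of_natDegree_lt hn,
      coeff_eq_zero_of_natDegree_lt (hn.trans n.lt_succ_self), map_zero, zero_mul, add_zero]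

theorem eq_one_of_implicitDeriv_one_eq_zero [CharZero F] (hF : ∀ u : F, u′ ≠ 1) {p : F[X]}
    (hp : p.Monic) (hp' : implicitDeriv 1 p = 0) : p = 1 := by
  by_contra hne
  obtain ⟨d, hd⟩ := Nat.exists_eq_succ_of_ne_zero (hp.natDegree_pos.mpr hne).ne'
  have hcoeff : (p.coeff d)′ + (d + 1) = 0 := by
    have h := coeff_implicitDeriv_one p d
    rwa [hp', coeff_zero, ← Nat.succ_eq_add_one, ← hd, hp.coeff_natDegree, one_mul, eq_comm] at h
  have hd₀ : (d + 1 : F) ≠ 0 := by exact_mod_cast d.succ_ne_zero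
  have hconst : (d + 1 : F)′ = 0 := by simp
  apply hF (-p.coeff d / (d + 1))
  rw [Derivation.leibniz_div_const _ _ _ hconst, map_neg, eq_neg_of_add_eq_zero_left hcoeff,
    neg_neg, smul_eq_mul, inv_mul_cancel₀ hd₀]

theorem ideal_eq_top_of_implicitDeriv_one_mem [CharZero F] (hF : ∀ u : F, u′ ≠ 1)
    {I : Ideal F[X]} (hI : I ≠ ⊥) (hI' : ∀ p ∈ I, implicitDeriv 1 p ∈ I) : I = ⊤ := by
  classical
  let g := normalize (Submodule.IsPrincipal.generator I)
  have hmem (p : F[X]) : p ∈ I ↔ g ∣ p := by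
    rw [normalize_dvd_iff, Submodule.IsPrincipal.mem_iff_generator_dvd]
  have hg : g.Monic :=
    monic_normalize (mt (Submodule.IsPrincipal.eq_bot_iff_generator_eq_zero I).mpr hI)
  have hg' : implicitDeriv 1 g = 0 :=
    eq_zero_of_dvd_of_degree_lt ((hmem _).mp (hI' g ((hmem g).mpr dvd_rfl)))
      (degree_implicitDeriv_one_lt hg)
  rw [Ideal.eq_top_iff_one, hmem, eq_one_of_implicitDeriv_one_eq_zero hF hg hg']

variable {E : Type*} [Field E] [Differential E] [Algebra F E] [DifferentialAlgebra F E]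

theorem deriv_aeval_of_deriv_eq_one {x : E} (hx : x′ = 1) (p : F[X]) :
    (aeval x p)′ = aeval x (implicitDeriv 1 p) :=
  Differential.deriv_aeval_eq_implicitDeriv x 1 (by rw [hx, map_one]) p

variable [ContainConstants F E]

variable {x : E} (hx : x′ = 1) (hxF : x ∉ (algebraMap F E).range)

include hx hxF

theorem deriv_ne_one_of_notMem_range (u : F) : u′ ≠ 1 := by
  intro hu
  obtain ⟨a, ha⟩ := mem_range_of_deriv_eq_zero F (x := x - algebraMap F E u)
    (by rw [map_sub, hx, deriv_algebraMap, hu, map_one, sub_self])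
  exact hxF ⟨a + u, by rw [map_add, ha, sub_add_cancel]⟩

variable [CharZero F]

theorem transcendental_of_deriv_eq_one : Transcendental F x := by
  rw [transcendental_iff_ker_eq_bot]
  by_contra hker
  refine RingHom.ker_ne_top (aeval (R := F) x) (ideal_eq_top_of_implicitDeriv_one_mem
    (deriv_ne_one_of_notMem_range hx hxF) hker fun p hp ↦ ?_)
  rw [RingHom.mem_ker] at hp ⊢
  rw [← deriv_aeval_of_deriv_eq_one hx, hp, map_zero]

theorem exists_aeval_eq_of_mem_adjoin {e : E} (he : e ∈ F⟮x⟯)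
    (hlog : Differential.logDeriv e ∈ (algebraMap F E).range) : ∃ p : F[X], aeval x p = e := by
  obtain rfl | he₀ := eq_or_ne e 0
  · exact ⟨0, map_zero _⟩
  obtain ⟨a, ha⟩ := hlog
  let denominators : Ideal F[X] :=
    { carrier := {q | ∃ p : F[X], aeval x p = e * aeval x q}
      zero_mem' := ⟨0, by simp⟩
      add_mem' := by
        rintro q₁ q₂ ⟨p₁, h₁⟩ ⟨p₂, h₂⟩
        exact ⟨p₁ + p₂, by rw [map_add, map_add, mul_add, h₁, h₂]⟩
      smul_mem' := by
        rintro r q ⟨p, h⟩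
        exact ⟨r * p, by rw [smul_eq_mul, map_mul, map_mul, h, mul_left_comm]⟩ }
  have hne : denominators ≠ ⊥ := by
    obtain ⟨p, q, rfl⟩ := (mem_adjoin_simple_iff F e).mp he
    have hq : aeval x q ≠ 0 := fun h ↦ he₀ (by rw [h, div_zero])
    exact (Submodule.ne_bot_iff _).mpr
      ⟨q, ⟨p, (div_mul_cancel₀ _ hq).symm⟩, fun h ↦ hq (by rw [h, map_zero])⟩
  have hstable : ∀ q ∈ denominators, implicitDeriv 1 q ∈ denominators := by
    rintro q ⟨p, h⟩
    refine ⟨implicitDeriv 1 p - C a * p, ?_⟩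
    have h' := congrArg (·′) h
    rw [Derivation.leibniz, deriv_aeval_of_deriv_eq_one hx, deriv_aeval_of_deriv_eq_one hx,
      smul_eq_mul, smul_eq_mul] at h'
    rw [map_sub, map_mul, aeval_C, h', h, ha, Differential.logDeriv]
    field_simp
    ring
  obtain ⟨p, hp⟩ : 1 ∈ denominators := (Ideal.eq_top_iff_one _).mp <|
    ideal_eq_top_of_implicitDeriv_one_mem (deriv_ne_one_of_notMem_range hx hxF) hne hstable
  exact ⟨p, by rw [hp, map_one, mul_one]⟩

theorem mem_range_of_logDeriv_mem_range_of_mem_adjoin {e : E} (he : e ∈ F⟮x⟯)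
    (hlog : Differential.logDeriv e ∈ (algebraMap F E).range) : e ∈ (algebraMap F E).range := by
  obtain ⟨p, rfl⟩ := exists_aeval_eq_of_mem_adjoin hx hxF he hlog
  obtain rfl | hp₀ := eq_or_ne p 0
  · simp
  obtain ⟨a, ha⟩ := hlog
  have hinj := transcendental_iff_injective.mp (transcendental_of_deriv_eq_one hx hxF)
  have he₀ : aeval x p ≠ 0 := (map_ne_zero_iff _ hinj).mpr hp₀
  have hderiv : implicitDeriv 1 p = C a * p := by
    apply hinj
    rw [← deriv_aeval_of_deriv_eq_one hx, map_mul, aeval_C, ha, Differential.logDeriv,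
      div_mul_cancel₀ _ he₀]
  have hlead₀ : p.leadingCoeff ≠ 0 := leadingCoeff_ne_zero.mpr hp₀
  have hlead : Differential.logDeriv p.leadingCoeff = a := by
    rw [Differential.logDeriv, ← coeff_natDegree_implicitDeriv_one, hderiv, coeff_C_mul,
      coeff_natDegree, mul_div_cancel_right₀ _ hlead₀]
  refine mem_range_of_logDeriv_eq he₀ ⟨p.leadingCoeff, rfl⟩ (by simpa using hp₀) ?_
  rw [← ha, Differential.logDeriv_algebraMap, hlead]

end Primitive

theorem exists_div_mem_range_of_mem_span {K E ι : Type*} [Field K] [Differential K] [Field E]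
    [Differential E] [Algebra K E] [DifferentialAlgebra K E] [ContainConstants K E] {v : ι → E}
    (hv : LinearIndependent K v)
    (hlog : ∀ i, Differential.logDeriv (v i) ∈ (algebraMap K E).range) {e : E} (he : e ≠ 0)
    (hespan : e ∈ Submodule.span K (Set.range v))
    (helog : Differential.logDeriv e ∈ (algebraMap K E).range) :
    ∃ i, e / v i ∈ (algebraMap K E).range := by
  obtain ⟨a, rfl⟩ := (Finsupp.mem_span_range_iff_exists_finsupp).mp hespan
  obtain ⟨μ, hμ⟩ := helog
  choose ν hν using hlog
  set e := a.sum fun i c ↦ c • v i with hedef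
  have hderiv : ∑ i ∈ a.support, ((a i)′ + ν i * a i - μ * a i) • v i = 0 := by
    have he' : e′ = algebraMap K E μ * e := by
      rw [hμ, Differential.logDeriv, div_mul_cancel₀ _ he]
    have hv' (i : ι) : (v i)′ = algebraMap K E (ν i) * v i := by
      rw [hν, Differential.logDeriv, div_mul_cancel₀ _ (hv.ne_zero i)]
    have hsub := sub_eq_zero.mpr he'
    rw [hedef, Finsupp.sum, map_sum, Finset.mul_sum, ← Finset.sum_sub_distrib] at hsub
    rw [← hsub]
    refine Finset.sum_congr rfl fun i _ ↦ ?_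
    simp only [Algebra.smul_def, map_sub, map_add, map_mul, Derivation.leibniz, deriv_algebraMap,
      Algebra.algebraMap_self, RingHom.id_apply, hv']
    ring
  obtain ⟨i, hi⟩ : a.support.Nonempty := by
    rw [Finsupp.support_nonempty_iff]
    exact fun h ↦ he (by rw [hedef, h, Finsupp.sum_zero_index])
  have hai : a i ≠ 0 := Finsupp.mem_support_iff.mp hi
  have hlogai : Differential.logDeriv (a i) = μ - ν i := by
    rw [Differential.logDeriv, div_eq_iff hai]
    linear_combination linearIndependent_iff'.mp hv _ _ hderiv i hi
  refine ⟨i, mem_range_of_logDeriv_eq (f := algebraMap K E (a i)) (div_ne_zero he (hv.ne_zero i))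
    ⟨a i, rfl⟩ (by simpa using hai) ?_⟩
  rw [Differential.logDeriv_div _ _ he (hv.ne_zero i), Differential.logDeriv_algebraMap, hlogai,
    map_sub, hμ, hν]

theorem mem_range_of_mul_mem_span {F K E ι : Type*} [Field F] [Field K] [Field E] [Algebra F K]
    [Algebra K E] [Algebra F E] [IsScalarTower F K E] {v : ι → E} (hv : LinearIndependent K v)
    {q : E} (hq : q ≠ 0) (hqspan : q ∈ Submodule.span F (Set.range v)) {f : K}
    (hfq : f • q ∈ Submodule.span F (Set.range v)) : f ∈ (algebraMap F K).range := by
  obtain ⟨a, rfl⟩ := Finsupp.mem_span_range_iff_exists_finsupp.mp hqspan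
  obtain ⟨b, hb⟩ := Finsupp.mem_span_range_iff_exists_finsupp.mp hfq
  obtain ⟨i, hi⟩ : ∃ i, a i ≠ 0 := by
    by_contra! h
    exact hq (by simp [DFunLike.ext a 0 h])
  have hcoeff := hv (a₁ := f • a.mapRange (algebraMap F K) (map_zero _))
    (a₂ := b.mapRange (algebraMap F K) (map_zero _)) (by
      simp [Finsupp.linearCombination_apply, Finsupp.sum_mapRange_index, hb])
  have hi' : f * algebraMap F K (a i) = algebraMap F K (b i) := DFunLike.congr_fun hcoeff i
  refine ⟨b i / a i, ?_⟩
  rw [map_div₀, ← hi', mul_div_cancel_right₀]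
  simpa using hi

instance {F E : Type*} [Field F] [Field E] [Differential E] [Algebra F E] [ContainConstants F E]
    (K : IntermediateField F E) : ContainConstants K E where
  mem_range_of_deriv_eq_zero h := by
    obtain ⟨a, rfl⟩ := mem_range_of_deriv_eq_zero F h
    exact ⟨algebraMap F K a, rfl⟩

section Restriction

variable {F E : Type*} [Field F] [Field E] [Differential E] [Algebra F E]
  {K : IntermediateField F E}

/-- The structure of a differential field on an intermediate field that is closed under the
derivation of the ambient field. -/
abbrev restrictDifferential (hK : ∀ x ∈ K, x′ ∈ K) : Differential K where
  deriv := Derivation.mk'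
    (AddMonoidHom.mk' (fun x : K ↦ (⟨(x : E)′, hK x x.2⟩ : K))
      fun _ _ ↦ Subtype.ext (map_add _ _ _)).toIntLinearMap
    fun _ _ ↦ Subtype.ext (Derivation.leibniz _ _ _)

theorem restrictDifferential_differentialAlgebra (hK : ∀ x ∈ K, x′ ∈ K) :
    letI := restrictDifferential hK
    DifferentialAlgebra K E :=
  letI := restrictDifferential hK
  ⟨fun _ ↦ rfl⟩

end Restriction

theorem linearIndependent_pow_of_transcendental {R A : Type*} [CommRing R] [Ring A] [Algebra R A]
    {x : A} (hx : Transcendental R x) : LinearIndependent R fun n : ℕ ↦ x ^ n := by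
  have h := (basisMonomials R).linearIndependent.map' (aeval x).toLinearMap
    (LinearMap.ker_eq_bot.mpr (transcendental_iff_injective.mp hx))
  simpa [Function.comp_def] using h

section Descent

variable {F E : Type*} [Field F] [Field E] [Algebra F E] {K : IntermediateField F E}

theorem algebraAdjoin_val_image_eq_span (Γ : Subgroup Eˣ) :
    (Algebra.adjoin F (Units.val '' (Γ : Set Eˣ))).toSubmodule =
      Submodule.span F (Units.val '' (Γ : Set Eˣ)) := by
  rw [Algebra.adjoin_eq_span]
  congr
  exact congrArg SetLike.coe (Submonoid.closure_eq (Γ.toSubmonoid.map (Units.coeHom E)))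

theorem inf_adjoin_eq_bot_of_span {S : Set E} {ι : Type*} {v : ι → E}
    (hv : LinearIndependent K v)
    (hS : (Algebra.adjoin F S).toSubmodule = Submodule.span F (Set.range v)) :
    K ⊓ adjoin F S = ⊥ := by
  rw [eq_bot_iff]
  rintro f ⟨hfK, hfS⟩
  obtain ⟨p, hp, q, hq, rfl⟩ := mem_adjoin_iff_div.mp hfS
  obtain rfl | hq₀ := eq_or_ne q 0
  · rw [div_zero]
    exact zero_mem _
  obtain ⟨a, ha⟩ := mem_range_of_mul_mem_span (F := F) (f := ⟨p / q, hfK⟩) hv hq₀ (hS ▸ hq) <| by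
    rw [IntermediateField.smul_def, smul_eq_mul, div_mul_cancel₀ _ hq₀]
    exact hS ▸ hp
  exact mem_bot.mpr ⟨a, congrArg Subtype.val ha⟩

theorem inf_adjoin_simple_eq_bot_of_transcendental {x : E} (hx : Transcendental K x) :
    K ⊓ F⟮x⟯ = ⊥ := by
  refine inf_adjoin_eq_bot_of_span (linearIndependent_pow_of_transcendental hx) ?_
  rw [Algebra.adjoin_eq_span, ← Submonoid.powers_eq_closure, Submonoid.coe_powers]

variable [Differential E] [ContainConstants F E]

theorem inf_adjoin_exponentials_eq_bot (hK : ∀ x ∈ K, x′ ∈ K) {Γ : Subgroup Eˣ}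
    (hlog : ∀ γ ∈ Γ, Differential.logDeriv (γ : E) ∈ K)
    (hΓ : ∀ γ ∈ Γ, (γ : E) ∈ K → (γ : E) ∈ (⊥ : IntermediateField F E)) :
    K ⊓ adjoin F (Units.val '' (Γ : Set Eˣ)) = ⊥ := by
  let _ := restrictDifferential hK
  have := restrictDifferential_differentialAlgebra hK
  obtain ⟨B, hBΓ, hBspan, hB⟩ := exists_linearIndependent K (Units.val '' (Γ : Set Eˣ))
  have hlogB (b : B) : Differential.logDeriv (b : E) ∈ (algebraMap K E).range := by
    obtain ⟨γ, hγ, hγb⟩ := hBΓ b.2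
    exact ⟨⟨_, hγb ▸ hlog γ hγ⟩, rfl⟩
  refine inf_adjoin_eq_bot_of_span hB ?_
  rw [algebraAdjoin_val_image_eq_span, Subtype.range_coe]
  refine (Submodule.span_le.mpr ?_).antisymm (Submodule.span_mono hBΓ)
  rintro _ ⟨γ, hγ, rfl⟩
  have hγB : (γ : E) ∈ Submodule.span K (Set.range ((↑) : B → E)) := by
    rw [Subtype.range_coe, hBspan]
    exact Submodule.subset_span ⟨γ, hγ, rfl⟩
  obtain ⟨⟨_, hb⟩, k, hk⟩ := exists_div_mem_range_of_mem_span hB hlogB γ.ne_zero hγB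
    ⟨⟨_, hlog γ hγ⟩, rfl⟩
  obtain ⟨β, hβ, rfl⟩ := hBΓ hb
  have hγβ : ((γ / β : Eˣ) : E) ∈ K := by
    rw [Units.val_div_eq_div_val, ← hk]
    exact k.2
  obtain ⟨a, ha⟩ := mem_bot.mp (hΓ (γ / β) (div_mem hγ hβ) hγβ)
  rw [Units.val_div_eq_div_val, eq_div_iff β.ne_zero, ← Algebra.smul_def] at ha
  exact ha ▸ Submodule.smul_mem _ a (Submodule.subset_span hb)

end Descent

section Structure

variable {k E : Type*} [Field k] [Field E] [Algebra k E]

theorem inf_sup_adjoin_eq_of_extendScalars_inf_adjoin_eq_bot {F K : IntermediateField k E}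
    (hFK : F ≤ K) {S : Set E} (h : extendScalars hFK ⊓ adjoin F S = ⊥) :
    K ⊓ (F ⊔ adjoin k S) = F := by
  rw [← restrictScalars_adjoin_eq_sup]
  refine le_antisymm (fun y hy ↦ ?_) (le_inf hFK fun y hy ↦ ?_)
  · have hy' : y ∈ extendScalars hFK ⊓ adjoin F S := ⟨hy.1, hy.2⟩
    rw [h, mem_bot] at hy'
    obtain ⟨a, rfl⟩ := hy'
    exact a.2
  · exact IntermediateField.algebraMap_mem (adjoin F S) ⟨y, hy⟩

theorem inf_sup_adjoin_simple_eq {F K : IntermediateField k E} (hFK : F ≤ K) {x : E}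
    (hx : Transcendental K x) : K ⊓ (F ⊔ k⟮x⟯) = F :=
  inf_sup_adjoin_eq_of_extendScalars_inf_adjoin_eq_bot hFK
    (inf_adjoin_simple_eq_bot_of_transcendental (K := extendScalars hFK) hx)

variable [Differential E]

theorem deriv_mem_adjoin [Differential k] [DifferentialAlgebra k E] {S : Set E}
    (hS : ∀ s ∈ S, s′ ∈ adjoin k S) : ∀ y ∈ adjoin k S, y′ ∈ adjoin k S := by
  intro y hy
  induction hy using adjoin_induction with
  | mem s hs => exact hS s hs
  | algebraMap a => exact deriv_algebraMap (B := E) a ▸ IntermediateField.algebraMap_mem _ _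
  | add y z _ _ hy' hz' => exact map_add Differential.deriv y z ▸ add_mem hy' hz'
  | inv y hy hy' =>
    rw [Derivation.leibniz_inv]
    exact mul_mem (neg_mem (pow_mem (inv_mem hy) 2)) hy'
  | mul y z hy hz hy' hz' =>
    rw [Derivation.leibniz]
    exact add_mem (mul_mem hy hz') (mul_mem hz hy')

theorem deriv_mem_adjoin_union_exponentials [Differential k] [DifferentialAlgebra k E]
    {T : Set E} (hT : ∀ x ∈ T, x′ = 1) {Γ : Set Eˣ}
    (hlog : ∀ γ ∈ Γ, Differential.logDeriv (γ : E) ∈ (algebraMap k E).range) :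
    ∀ y ∈ adjoin k (T ∪ Units.val '' Γ), y′ ∈ adjoin k (T ∪ Units.val '' Γ) := by
  refine deriv_mem_adjoin ?_
  rintro _ (hx | ⟨γ, hγ, rfl⟩)
  · exact hT _ hx ▸ one_mem _
  · obtain ⟨a, ha⟩ := hlog γ hγ
    rw [← div_mul_cancel₀ (γ : E)′ γ.ne_zero, ← Differential.logDeriv, ← ha]
    exact mul_mem (IntermediateField.algebraMap_mem _ a) (subset_adjoin k _ (.inr ⟨γ, hγ, rfl⟩))

variable {K : IntermediateField k E} (hK : ∀ y ∈ K, y′ ∈ K)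

include hK

theorem deriv_mem_sup_adjoin_simple {x : E} (hx : x′ = 1) :
    ∀ y ∈ K ⊔ k⟮x⟯, y′ ∈ K ⊔ k⟮x⟯ := by
  let _ := restrictDifferential hK
  have := restrictDifferential_differentialAlgebra hK
  rw [← restrictScalars_adjoin_eq_sup]
  exact deriv_mem_adjoin (k := K) (S := {x}) (by simp [hx])

variable [ContainConstants k E]

section Primitive

variable [CharZero E] {x : E} (hx : x′ = 1) (hxK : x ∉ K)

include hx hxK

theorem transcendental_of_deriv_eq_one_of_notMem : Transcendental K x := by
  let _ := restrictDifferential hK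
  have := restrictDifferential_differentialAlgebra hK
  refine transcendental_of_deriv_eq_one hx ?_
  rintro ⟨y, rfl⟩
  exact hxK y.2

theorem mem_of_logDeriv_mem_of_mem_sup_adjoin_simple {e : E} (he : e ∈ K ⊔ k⟮x⟯)
    (hlog : Differential.logDeriv e ∈ K) : e ∈ K := by
  let _ := restrictDifferential hK
  have := restrictDifferential_differentialAlgebra hK
  rw [← restrictScalars_adjoin_eq_sup] at he
  obtain ⟨y, rfl⟩ := mem_range_of_logDeriv_mem_range_of_mem_adjoin hx
    (fun ⟨y, hy⟩ ↦ hxK (hy ▸ y.2)) he ⟨⟨_, hlog⟩, rfl⟩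
  exact y.2

end Primitive

variable {Γ : Subgroup Eˣ} (hlog : ∀ γ ∈ Γ, Differential.logDeriv (γ : E) ∈ K)

include hlog

theorem inf_sup_adjoin_exponentials_eq {F : IntermediateField k E} (hFK : F ≤ K)
    (hΓ : ∀ γ ∈ Γ, (γ : E) ∈ K → (γ : E) ∈ F) :
    K ⊓ (F ⊔ adjoin k (Units.val '' (Γ : Set Eˣ))) = F :=
  inf_sup_adjoin_eq_of_extendScalars_inf_adjoin_eq_bot hFK
    (inf_adjoin_exponentials_eq_bot (K := extendScalars hFK) hK hlog
      fun γ hγ hγK ↦ mem_bot.mpr ⟨⟨γ, hΓ γ hγ hγK⟩, rfl⟩)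

theorem eq_of_le_of_sup_adjoin_exponentials_eq_top {F : IntermediateField k E} (hFK : F ≤ K)
    (hΓ : ∀ γ ∈ Γ, (γ : E) ∈ K → (γ : E) ∈ F)
    (htop : F ⊔ adjoin k (Units.val '' (Γ : Set Eˣ)) = ⊤) : F = K := by
  rw [← inf_sup_adjoin_exponentials_eq hK hlog hFK hΓ, htop, inf_top_eq]

theorem adjoin_inter_union_eq [CharZero E] {T : Set E} (hT : T.Subsingleton)
    (hT₁ : ∀ x ∈ T, x′ = 1) (htop : adjoin k (T ∪ Units.val '' (Γ : Set Eˣ)) = ⊤) :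
    adjoin k (K ∩ (T ∪ Units.val '' (Γ : Set Eˣ))) = K := by
  set F := adjoin k (K ∩ (T ∪ Units.val '' (Γ : Set Eˣ)))
  have hFK : F ≤ K := adjoin_le_iff.mpr Set.inter_subset_left
  have hΓF (γ : Eˣ) (hγ : γ ∈ Γ) (hγK : (γ : E) ∈ K) : (γ : E) ∈ F :=
    subset_adjoin k _ ⟨hγK, .inr ⟨γ, hγ, rfl⟩⟩
  rw [adjoin_union] at htop
  by_cases hTK : T ⊆ K
  · have hTF : adjoin k T ≤ F := adjoin.mono _ _ _ fun x hx ↦ ⟨hTK hx, .inl hx⟩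
    exact eq_of_le_of_sup_adjoin_exponentials_eq_top hK hlog hFK hΓF
      (top_unique (htop.ge.trans (sup_le_sup_right hTF _)))
  · obtain ⟨x, hxT, hxK⟩ := Set.not_subset.mp hTK
    obtain rfl := hT.eq_singleton_of_mem hxT
    have hx : x′ = 1 := hT₁ x rfl
    have hsup : F ⊔ k⟮x⟯ = K ⊔ k⟮x⟯ :=
      eq_of_le_of_sup_adjoin_exponentials_eq_top (deriv_mem_sup_adjoin_simple hK hx)
        (fun γ hγ ↦ le_sup_left (a := K) (hlog γ hγ)) (sup_le_sup_right hFK _)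
        (fun γ hγ hγKx ↦ le_sup_left (a := F) (hΓF γ hγ
          (mem_of_logDeriv_mem_of_mem_sup_adjoin_simple hK hx hxK hγKx (hlog γ hγ))))
        (by rw [sup_assoc, htop, sup_top_eq])
    rw [← inf_sup_adjoin_simple_eq hFK (transcendental_of_deriv_eq_one_of_notMem hK hx hxK), hsup,
      inf_sup_self]

end Structure

section Solutions

theorem derivation_pow_apply_pow_of_apply_eq_one {R A : Type*} [CommRing R] [CommRing A]
    [Algebra R A] {D : Derivation R A A} {x : A} (hx : D x = 1) (n : ℕ) :
    ((D : Module.End R A) ^ n) (x ^ n) = n.factorial := by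
  induction n with
  | zero => simp
  | succ n ih =>
    have hstep : (D : Module.End R A) (x ^ (n + 1)) = ((n + 1 : ℕ) : R) • x ^ n := by
      rw [Derivation.coeFn_coe, Derivation.leibniz_pow, hx, smul_eq_mul, mul_one,
        Nat.add_sub_cancel, Nat.cast_smul_eq_nsmul]
    rw [pow_succ, Module.End.mul_apply, hstep, map_smul, ih, Nat.cast_smul_eq_nsmul,
      nsmul_eq_mul, Nat.factorial_succ, Nat.cast_mul]

/-- The polynomial `Xⁿ + aₙ₋₁ Xⁿ⁻¹ + ⋯ + a₀` of the operator `∂ⁿ + aₙ₋₁ ∂ⁿ⁻¹ + ⋯ + a₀` with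
constant coefficients; evaluating it at `∂` gives back the operator. -/
noncomputable def operatorPolynomial {R : Type*} [CommRing R] {n : ℕ} (a : Fin n → R) : R[X] :=
  X ^ n + ∑ i, C (a i) * X ^ (i : ℕ)

theorem monic_operatorPolynomial {R : Type*} [CommRing R] {n : ℕ} (a : Fin n → R) :
    (operatorPolynomial a).Monic :=
  monic_X_pow_add (degree_sum_fin_lt a)

theorem aeval_operatorPolynomial_apply {k E : Type*} [Field k] [Field E] [Algebra k E]
    (D : Derivation k E E) {n : ℕ} (a : Fin n → k) (y : E) :
    aeval (D : Module.End k E) (operatorPolynomial a) y =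
      LApply D n (fun i ↦ algebraMap k E (a i)) y := by
  simp [operatorPolynomial, LApply, Module.End.pow_apply, Algebra.smul_def]

theorem aeval_apply_eq_zero_of_dvd {R M : Type*} [CommRing R] [AddCommGroup M] [Module R M]
    {f : Module.End R M} {p q : R[X]} (hpq : p ∣ q) {y : M} (hy : aeval f p y = 0) :
    aeval f q y = 0 := by
  obtain ⟨r, rfl⟩ := hpq
  rw [mul_comm, map_mul, Module.End.mul_apply, hy, map_zero]

variable {k E : Type*} [Field k] [Field E] [Algebra k E] {D : Derivation k E E}

theorem derivation_pow_apply_div_of_apply_eq_smul {e : E} {r : k} (he : D e = r • e)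
    (n : ℕ) (y : E) : ((D : Module.End k E) ^ n) (y / e) =
      (((D : Module.End k E) - algebraMap k (Module.End k E) r) ^ n) y / e := by
  obtain rfl | he₀ := eq_or_ne e 0
  · simp
  induction n generalizing y with
  | zero => simp
  | succ n ih =>
    have hstep : (D : Module.End k E) (y / e) =
        ((D : Module.End k E) - algebraMap k (Module.End k E) r) y / e := by
      rw [Derivation.coeFn_coe, Derivation.leibniz_div, he, LinearMap.sub_apply,
        Derivation.coeFn_coe, Module.algebraMap_end_apply]
      simp only [smul_eq_mul, Algebra.smul_def]
      field_simp
    rw [pow_succ, pow_succ, Module.End.mul_apply, Module.End.mul_apply, hstep, ih]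

variable (hconst : ∀ y, D y = 0 → y ∈ (algebraMap k E).range) {F : IntermediateField k E}

include hconst

theorem mem_of_derivation_pow_apply_eq_zero [CharZero E] (hX : ∀ x, D x = 1 → x ∈ F) (n : ℕ) {y : E}
    (hy : ((D : Module.End k E) ^ n) y = 0) : y ∈ F := by
  induction n generalizing y with
  | zero => exact (show y = 0 from hy) ▸ zero_mem F
  | succ n ih =>
    rw [pow_succ', Module.End.mul_apply] at hy
    obtain ⟨a, ha⟩ := hconst _ hy
    obtain rfl | ha₀ := eq_or_ne a 0
    · exact ih (ha.symm.trans (map_zero _))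
    obtain _ | n := n
    · exact (show _ = y from ha) ▸ IntermediateField.algebraMap_mem F a
    obtain ⟨x, hx⟩ : ∃ x, D x = 1 := by
      refine ⟨a⁻¹ • ((D : Module.End k E) ^ n) y, ?_⟩
      rw [pow_succ', Module.End.mul_apply, Derivation.coeFn_coe] at ha
      rw [D.map_smul, ← ha, Algebra.smul_def, ← map_mul, inv_mul_cancel₀ ha₀, map_one]
    let z := (a / (n + 1).factorial) • x ^ (n + 1)
    have hz : ((D : Module.End k E) ^ (n + 1)) (y - z) = 0 := by
      rw [map_sub, map_smul, derivation_pow_apply_pow_of_apply_eq_one hx, ← ha,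
        Algebra.smul_def, map_div₀, map_natCast,
        div_mul_cancel₀ _ (by exact_mod_cast (n + 1).factorial_ne_zero), sub_self]
    have hzF : z ∈ F := F.smul_mem (pow_mem (hX x hx) _)
    exact sub_add_cancel y z ▸ add_mem (ih hz) hzF

variable [CharZero E] (hX : ∀ x, D x = 1 → x ∈ F)

include hX

theorem mem_of_derivation_sub_algebraMap_pow_apply_eq_zero {r : k}
    (hr : ∀ e, D e = r • e → e ∈ F) (n : ℕ) {y : E}
    (hy : (((D : Module.End k E) - algebraMap k (Module.End k E) r) ^ n) y = 0) : y ∈ F := by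
  by_cases hexp : ∃ e ≠ 0, D e = r • e
  · obtain ⟨e, he₀, he⟩ := hexp
    have hye : y / e ∈ F := mem_of_derivation_pow_apply_eq_zero hconst hX n
      (by rw [derivation_pow_apply_div_of_apply_eq_smul he, hy, zero_div])
    exact div_mul_cancel₀ y he₀ ▸ mul_mem hye (hr e he)
  · have hinj : Function.Injective ((D : Module.End k E) - algebraMap k (Module.End k E) r) := by
      refine (injective_iff_map_eq_zero _).mpr fun e he ↦ ?_
      by_contra he₀
      exact hexp ⟨e, he₀, sub_eq_zero.mp he⟩
    rw [Module.End.pow_apply] at hy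
    exact (hinj.iterate n (hy.trans (iterate_map_zero _ n).symm)) ▸ zero_mem F

theorem mem_of_aeval_derivation_apply_eq_zero {P : k[X]} (hP : P ≠ 0) (hPs : P.Splits)
    (hroot : ∀ r, P.IsRoot r → ∀ e, D e = r • e → e ∈ F) {y : E}
    (hy : aeval (D : Module.End k E) P y = 0) : y ∈ F := by
  induction P using UniqueFactorizationMonoid.induction_on_coprime generalizing y with
  | h0 => exact absurd rfl hP
  | h1 hu =>
    have hy₀ := aeval_apply_eq_zero_of_dvd (hu.dvd (a := 1)) hy
    rw [map_one, Module.End.one_apply] at hy₀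
    exact hy₀ ▸ zero_mem F
  | @hpr p n hp =>
    obtain _ | n := n
    · exact (show y = 0 by simpa using hy) ▸ zero_mem F
    have hps : p.Splits := hPs.of_dvd hP (dvd_pow_self p n.succ_ne_zero)
    obtain ⟨r, hr⟩ := exists_root_of_degree_eq_one (hps.degree_eq_one_of_irreducible hp.irreducible)
    have hdvd : p ^ (n + 1) ∣ (X - C r) ^ (n + 1) := pow_dvd_pow_of_dvd
      ((irreducible_X_sub_C r).associated_of_dvd hp.irreducible (dvd_iff_isRoot.mpr hr)).dvd' _
    have hyr := aeval_apply_eq_zero_of_dvd hdvd hy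
    rw [map_pow, map_sub, aeval_X, aeval_C] at hyr
    exact mem_of_derivation_sub_algebraMap_pow_apply_eq_zero hconst hX
      (hroot r (by simp [IsRoot.def.mp hr])) (n + 1) hyr
  | @hcp p q hpq ihp ihq =>
    have hker : y ∈ (aeval (D : Module.End k E) (p * q)).ker := hy
    rw [← sup_ker_aeval_eq_ker_aeval_mul_of_coprime _ hpq.isCoprime, Submodule.mem_sup] at hker
    obtain ⟨u, hu, v, hv, rfl⟩ := hker
    have hp := left_ne_zero_of_mul hP
    have hq := right_ne_zero_of_mul hP
    exact add_mem
      (ihp hp (hPs.of_dvd hP (dvd_mul_right p q))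
        (fun r hr ↦ hroot r (root_mul_right_of_isRoot q hr)) hu)
      (ihq hq (hPs.of_dvd hP (dvd_mul_left q p))
        (fun r hr ↦ hroot r (root_mul_left_of_isRoot p hr)) hv)

end Solutions

theorem subgroup_fg_of_le {G : Type*} [CommGroup G] {H Γ : Subgroup G} (hΓ : Γ.FG) (h : H ≤ Γ) :
    H.FG := by
  have hΓ' : (Subgroup.toAddSubgroup Γ).toIntSubmodule.FG :=
    (Submodule.fg_iff_addSubgroup_fg _).mpr (Γ.fg_iff_add_fg.mp hΓ)
  have hH : (Subgroup.toAddSubgroup H).toIntSubmodule.FG := hΓ'.of_le h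
  exact H.fg_iff_add_fg.mpr ((Submodule.fg_iff_addSubgroup_fg _).mp hH)

section Generators

variable {k E : Type*} [Field k] [Field E] [Algebra k E]

theorem units_mem_adjoin_of_mem_closure {S : Set Eˣ} {γ : Eˣ} (hγ : γ ∈ Subgroup.closure S) :
    (γ : E) ∈ adjoin k (Units.val '' S) := by
  induction hγ using Subgroup.closure_induction with
  | mem s hs => exact subset_adjoin k _ ⟨s, hs, rfl⟩
  | one => exact one_mem _
  | mul γ₁ γ₂ _ _ h₁ h₂ => exact mul_mem h₁ h₂
  | inv γ _ h => exact Units.val_inv_eq_inv_val γ ▸ inv_mem h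

theorem exists_finite_adjoin_inter_eq (K : IntermediateField k E) (T : Set E) {Γ : Subgroup Eˣ}
    (hΓ : Γ.FG) : ∃ S : Set Eˣ, S.Finite ∧ S ⊆ Γ ∧
      adjoin k (K ∩ (T ∪ Units.val '' (Γ : Set Eˣ))) = adjoin k (K ∩ T ∪ Units.val '' S) := by
  obtain ⟨S, hSH, hS⟩ := (Subgroup.fg_iff _).mp
    (subgroup_fg_of_le (H := Γ ⊓ K.toSubalgebra.toSubsemiring.toSubmonoid.units) hΓ inf_le_left)
  have hSmem (s : Eˣ) (hs : s ∈ S) : s ∈ Γ ∧ (s : E) ∈ K := by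
    have h := hSH ▸ Subgroup.subset_closure hs
    exact ⟨h.1, ((Submonoid.mem_units_iff _ _).mp h.2).1⟩
  refine ⟨S, hS, fun s hs ↦ (hSmem s hs).1,
    le_antisymm (adjoin_le_iff.mpr ?_) (adjoin.mono _ _ _ ?_)⟩
  · rintro _ ⟨hyK, hyT | ⟨γ, hγ, rfl⟩⟩
    · exact subset_adjoin k _ (.inl ⟨hyK, hyT⟩)
    · refine adjoin.mono _ _ _ Set.subset_union_right (units_mem_adjoin_of_mem_closure ?_)
      rw [hSH]
      exact ⟨hγ, (Submonoid.mem_units_iff _ _).mpr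
        ⟨hyK, (Units.val_inv_eq_inv_val γ).symm ▸ inv_mem (S := IntermediateField k E) hyK⟩⟩
  · rintro _ (⟨hyK, hyT⟩ | ⟨s, hs, rfl⟩)
    · exact ⟨hyK, .inl hyT⟩
    · exact ⟨(hSmem s hs).2, .inr ⟨s, (hSmem s hs).1, rfl⟩⟩

variable [Differential E]

theorem logDeriv_mem_of_mem_closure {S : Set Eˣ} {A : AddSubgroup E}
    (hS : ∀ s ∈ S, Differential.logDeriv (s : E) ∈ A) {γ : Eˣ} (hγ : γ ∈ Subgroup.closure S) :
    Differential.logDeriv (γ : E) ∈ A := by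
  induction hγ using Subgroup.closure_induction with
  | mem s hs => exact hS s hs
  | one => simp
  | mul γ₁ γ₂ _ _ h₁ h₂ =>
    rw [Units.val_mul, Differential.logDeriv_mul _ _ γ₁.ne_zero γ₂.ne_zero]
    exact add_mem h₁ h₂
  | inv γ _ h =>
    rw [Units.val_inv_eq_inv_val, ← one_div, Differential.logDeriv_div _ _ one_ne_zero γ.ne_zero,
      Differential.logDeriv_one, zero_sub]
    exact neg_mem h

theorem exists_finite_exponentials [ContainConstants k E] {R : Set E} (hR : R.Finite) :
    ∃ S : Set Eˣ, S.Finite ∧ (∀ s ∈ S, Differential.logDeriv (s : E) ∈ R) ∧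
      ∀ e : E, Differential.logDeriv e ∈ R → e ∈ adjoin k (Units.val '' S) := by
  obtain ⟨S, hS, hbij⟩ := Set.exists_subset_bijOn {γ : Eˣ | Differential.logDeriv (γ : E) ∈ R}
    fun γ ↦ Differential.logDeriv (γ : E)
  refine ⟨S, hbij.finite_iff_finite.mpr (hR.subset ?_), hS, fun e he ↦ ?_⟩
  · rintro _ ⟨γ, hγ, rfl⟩
    exact hγ
  obtain rfl | he₀ := eq_or_ne e 0
  · exact zero_mem _
  obtain ⟨s, hs, hse⟩ := hbij.surjOn ⟨Units.mk0 e he₀, he, rfl⟩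
  have hsS : (s : E) ∈ adjoin k (Units.val '' S) := subset_adjoin k _ ⟨s, hs, rfl⟩
  have hconst : e / s ∈ (algebraMap k E).range := by
    refine mem_range_of_deriv_eq_zero k ?_
    rw [← Differential.logDeriv_eq_zero, Differential.logDeriv_div _ _ he₀ s.ne_zero]
    exact sub_eq_zero.mpr hse.symm
  obtain ⟨a, ha⟩ := hconst
  rw [← div_mul_cancel₀ e s.ne_zero, ← ha]
  exact mul_mem (IntermediateField.algebraMap_mem _ a) hsS

theorem exists_subsingleton_primitives [ContainConstants k E] : ∃ T : Set E, T.Subsingleton ∧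
    (∀ x ∈ T, x′ = 1) ∧ ∀ x : E, x′ = 1 → x ∈ adjoin k T := by
  by_cases h : ∃ x : E, x′ = 1
  · obtain ⟨x₀, hx₀⟩ := h
    refine ⟨{x₀}, Set.subsingleton_singleton, fun x hx ↦ hx ▸ hx₀, fun x hx ↦ ?_⟩
    obtain ⟨a, ha⟩ := mem_range_of_deriv_eq_zero k (x := x - x₀)
      (by rw [map_sub, hx, hx₀, sub_self])
    rw [← sub_add_cancel x x₀, ← ha]
    exact add_mem (IntermediateField.algebraMap_mem _ a) (mem_adjoin_simple_self k x₀)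
  · exact ⟨∅, Set.subsingleton_empty, by simp, fun x hx ↦ absurd ⟨x, hx⟩ h⟩

theorem exists_generators_solutions_of_splits [ContainConstants k E] [CharZero E]
    {D : Derivation k E E} (hD : ∀ y, D y = y′) {P : k[X]} (hP : P ≠ 0) (hPs : P.Splits) :
    ∃ (T : Set E) (Γ : Subgroup Eˣ), T.Subsingleton ∧ (∀ x ∈ T, x′ = 1) ∧ Γ.FG ∧
      (∀ γ ∈ Γ, Differential.logDeriv (γ : E) ∈ (algebraMap k E).range) ∧
      ∀ y, aeval (D : Module.End k E) P y = 0 → y ∈ adjoin k (T ∪ Units.val '' (Γ : Set Eˣ)) := by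
  obtain ⟨T, hT, hT₁, hX⟩ := exists_subsingleton_primitives (k := k) (E := E)
  obtain ⟨S, hS, hSlog, hexp⟩ := exists_finite_exponentials (k := k) (E := E)
    ((finite_setOfPred_isRoot hP).image (algebraMap k E))
  refine ⟨T, .closure S, hT, hT₁, (Subgroup.fg_iff _).mpr ⟨S, rfl, hS⟩,
    fun γ hγ ↦ logDeriv_mem_of_mem_closure (A := (algebraMap k E).range.toAddSubgroup) ?_ hγ,
    fun y hy ↦ mem_of_aeval_derivation_apply_eq_zero (fun y hy ↦ ?_) (fun x hx ↦ ?_) hP hPs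
      (fun r hr e he ↦ ?_) hy⟩
  · intro s hs
    obtain ⟨r, -, hr⟩ := hSlog s hs
    exact ⟨r, hr⟩
  · exact mem_range_of_deriv_eq_zero k (hD y ▸ hy)
  · exact adjoin.mono _ _ _ Set.subset_union_left (hX x (hD x ▸ hx))
  · obtain rfl | he₀ := eq_or_ne e 0
    · exact zero_mem _
    have helog : Differential.logDeriv e = algebraMap k E r := by
      rw [Differential.logDeriv, ← hD, he, Algebra.smul_def, mul_div_cancel_right₀ _ he₀]
    refine adjoin.mono _ _ _ ?_ (hexp e ⟨r, hr, helog.symm⟩)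
    exact (Set.image_mono Subgroup.subset_closure).trans Set.subset_union_right

end Generators

theorem exists_fin_range_eq_union {α : Type*} {T S : Set α} (hT : T.Subsingleton)
    (hS : S.Finite) : ∃ (l : ℕ) (y : Fin l → α), Set.range y = T ∪ S ∧
      ∀ i : Fin l, 1 ≤ (i : ℕ) → y i ∈ S := by
  obtain ⟨l, s, -, hs⟩ := hS.fin_param
  have hsS (i : Fin l) : s i ∈ S := hs ▸ Set.mem_range_self i
  obtain rfl | ⟨x, rfl⟩ := hT.eq_empty_or_singleton
  · exact ⟨l, s, by rw [hs, Set.empty_union], fun i _ ↦ hsS i⟩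
  · refine ⟨l + 1, Fin.cons x s, by rw [Fin.range_cons, hs, Set.singleton_union], fun i hi ↦ ?_⟩
    obtain ⟨j, rfl⟩ := Fin.exists_succ_eq.mpr (fun h ↦ by simp [h] at hi : i ≠ 0)
    exact hsS j

theorem exists_fin_generators_intermediateField {k E : Type*} [Field k] [Field E] [Algebra k E]
    [Differential E] [ContainConstants k E] [CharZero E] {K : IntermediateField k E}
    (hK : ∀ y ∈ K, y′ ∈ K) {T : Set E} (hT : T.Subsingleton) (hT₁ : ∀ x ∈ T, x′ = 1)
    {Γ : Subgroup Eˣ} (hΓ : Γ.FG)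
    (hlog : ∀ γ ∈ Γ, Differential.logDeriv (γ : E) ∈ (algebraMap k E).range)
    (htop : adjoin k (T ∪ Units.val '' (Γ : Set Eˣ)) = ⊤) :
    ∃ (l : ℕ) (y : Fin l → E), adjoin k (Set.range y) = K ∧
      (∀ i : Fin l, 1 ≤ (i : ℕ) → Differential.logDeriv (y i) ∈ (algebraMap k E).range) ∧
      ∀ i, (y i)′ = 1 ∨ Differential.logDeriv (y i) ∈ (algebraMap k E).range := by
  have hlogK (γ : Eˣ) (hγ : γ ∈ Γ) : Differential.logDeriv (γ : E) ∈ K := by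
    obtain ⟨a, ha⟩ := hlog γ hγ
    exact ha ▸ IntermediateField.algebraMap_mem K a
  obtain ⟨S, hS, hSΓ, hKS⟩ := exists_finite_adjoin_inter_eq K T hΓ
  have hSlog : ∀ y ∈ Units.val '' S, Differential.logDeriv y ∈ (algebraMap k E).range := by
    rintro _ ⟨γ, hγ, rfl⟩
    exact hlog γ (hSΓ hγ)
  obtain ⟨l, y, hy, hyS⟩ := exists_fin_range_eq_union (hT.anti (Set.inter_subset_right (s := K)))
    (hS.image Units.val)
  refine ⟨l, y, ?_, fun i hi ↦ hSlog _ (hyS i hi), fun i ↦ ?_⟩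
  · rw [hy, ← hKS, adjoin_inter_union_eq hK hlogK hT hT₁ htop]
  · exact (hy ▸ Set.mem_range_self i : y i ∈ (K : Set E) ∩ T ∪ Units.val '' S).imp
      (fun h ↦ hT₁ _ h.2) (hSlog _)

theorem stmt16_general {E : Type u} [Field E] [CharZero E] (D : Derivation ℤ E E)
    (c : Subfield E) (hc : ∀ x ∈ c, D x = 0) (hconst : ∀ x, D x = 0 → x ∈ c)
    {n : ℕ} (a : Fin n → c) (hsplit : (operatorPolynomial a).Splits)
    (S : Set E) (hS : ∀ y ∈ S, LApply D n (fun i ↦ a i) y = 0) (hgen : diffGen D c S = ⊤)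
    (K : Subfield E) (hcK : c ≤ K) (hKd : ∀ x ∈ K, D x ∈ K) :
    ∃ (l : ℕ) (y : Fin l → E),
      (∀ i, y i ∈ K) ∧
      Subfield.closure (↑c ∪ Set.range y) = K ∧
      (∀ i : Fin l, 1 ≤ (i : ℕ) → D (y i) / y i ∈ c) ∧
      (∀ i : Fin l, (i : ℕ) = 0 → (D (y i) = 1 ∨ D (y i) / y i ∈ c)) := by
  let _ : Differential E := ⟨D⟩
  let _ : Differential c := ⟨0⟩
  have : DifferentialAlgebra c E := ⟨fun x ↦ hc x x.2⟩
  have : ContainConstants c E := ⟨fun {x} hx ↦ ⟨⟨x, hconst x hx⟩, rfl⟩⟩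
  let D' : Derivation c E E := .mk'
    { toFun := D
      map_add' := map_add D
      map_smul' := fun x y ↦ by simp [Subfield.smul_def, D.leibniz, hc x x.2] } D.leibniz
  obtain ⟨T, Γ, hT, hT₁, hΓ, hlog, hsol⟩ := exists_generators_solutions_of_splits (D := D')
    (fun _ ↦ rfl) (monic_operatorPolynomial a).ne_zero hsplit
  have htop : adjoin c (T ∪ Units.val '' (Γ : Set Eˣ)) = ⊤ := by
    refine toSubfield_injective (top_unique (hgen ▸ sInf_le ⟨?_, fun y hy ↦ hsol y ?_, ?_⟩))
    · exact fun x hx ↦ IntermediateField.algebraMap_mem _ (⟨x, hx⟩ : c)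
    · exact (aeval_operatorPolynomial_apply D' a y).trans (hS y hy)
    · exact deriv_mem_adjoin_union_exponentials hT₁ hlog
  obtain ⟨l, y, hy, hylog, hy₁⟩ := exists_fin_generators_intermediateField
    (K := Subfield.extendScalars hcK) hKd hT hT₁ hΓ hlog htop
  have hrange (z : E) (hz : z ∈ (algebraMap c E).range) : z ∈ c := by
    obtain ⟨a, rfl⟩ := hz
    exact a.2
  refine ⟨l, y, fun i ↦ ?_, ?_, fun i hi ↦ hrange _ (hylog i hi),
    fun i _ ↦ (hy₁ i).imp_right (hrange _)⟩
  · exact (hy ▸ subset_adjoin c _ (Set.mem_range_self i) : y i ∈ Subfield.extendScalars hcK)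
  · have hK := congrArg IntermediateField.toSubfield hy
    rwa [adjoin_toSubfield, show Set.range (algebraMap c E) = c from Subtype.range_coe] at hK

/-- Let `E` be a Picard–Vessiot extension of an algebraically closed field
of constants `C` (with zero derivation) and let `C ⊆ K ⊆ E` be an intermediate differential
field. Then `K = C(y₁,…,y_l)` where `yᵢ'/yᵢ ∈ C` for `i ≥ 2` and either `y₁' = 1` or
`y₁'/y₁ ∈ C`. -/
theorem stmt16 {E : Type u} [Field E] [CharZero E] (D : Derivation ℤ E E)
    (c : Subfield E)
    (hc : ∀ x ∈ c, D x = 0)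
    (hCalg : IsAlgClosed ↥c)
    (hPV : IsPV (⇑D) c ⊤)
    (K : Subfield E) (hcK : c ≤ K) (hKd : ∀ x ∈ K, D x ∈ K) :
    ∃ (l : ℕ) (y : Fin l → E),
      (∀ i, y i ∈ K) ∧
      Subfield.closure (↑c ∪ Set.range y) = K ∧
      (∀ i : Fin l, 1 ≤ (i : ℕ) → D (y i) / y i ∈ c) ∧
      (∀ i : Fin l, (i : ℕ) = 0 → (D (y i) = 1 ∨ D (y i) / y i ∈ c)) := by
  obtain ⟨n, a, -, -, -, hconst, ha, y, -, hy, -, hgen⟩ := hPV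
  exact stmt16_general D c hc (fun x ↦ hconst x trivial) (fun i ↦ ⟨a i, ha i⟩)
    (IsAlgClosed.splits _) _ (Set.forall_mem_range.mpr hy) hgen K hcK hKd
end

section
/- Let C be an algebraically closed field of characteristic zero and let n ≥ 3 be an integer. Equip the rational function field C(t) with the unique derivation D satisfying D(c) = 0 for all c ∈ C and D(t) = 1. Then there is no u ∈ C(t) with D(u) = 1/(tⁿ − 1), and there are no u ∈ C(t) with u ≠ 0 and nonzero c ∈ C such that D(u)/(c·u) = 1/(tⁿ − 1). -/
universe u

/-!
A derivative `D u` in `K(t)` has no residues, while `1 / f` has residue `1 / f'(z) ≠ 0` at a simple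
root `z` of `f`. A logarithmic derivative `D u / u` has only integer residues (the orders of `u`),
so `D u / u = c / f` forces `c / f'(z) ∈ ℤ` at every such root. For `f = t ^ n - 1` we have
`1 / f'(z) = z / n`, so `c / n` and `c ζ / n` are both integers for a primitive `n`-th root of
unity `ζ`; when `c ≠ 0` this makes `ζ` rational, hence `n ≤ 2`.
-/

open Polynomial IntermediateField

section RootsOfUnity

variable {L : Type*} [Field L] [CharZero L] {ζ : L} {n : ℕ}

lemma le_two_of_isPrimitiveRoot_ratCast {r : ℚ} (h : IsPrimitiveRoot (r : L) n) : n ≤ 2 := by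
  have hr : IsPrimitiveRoot r n :=
    IsPrimitiveRoot.of_map_of_injective (f := algebraMap ℚ L) (by simpa using h)
      (algebraMap ℚ L).injective
  exact hr.eq_orderOf ▸ LinearOrderedRing.orderOf_le_two

lemma eq_zero_of_forall_pow_eq_one_eq_int_mul (hζ : IsPrimitiveRoot ζ n) (hn : 3 ≤ n) {c : L}
    (hc : ∀ z : L, z ^ n = 1 → ∃ m : ℤ, c = m * (n * z ^ (n - 1))) : c = 0 := by
  obtain ⟨m, hm⟩ := hc 1 (one_pow n)
  obtain ⟨k, hk⟩ := hc ζ hζ.pow_eq_one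
  have hn0 : (n : L) ≠ 0 := by exact_mod_cast (by lia : n ≠ 0)
  have hζn : ζ ^ (n - 1) * ζ = 1 := by rw [pow_sub_one_mul (by lia), hζ.pow_eq_one]
  have hmk : m * ζ = k := by
    refine mul_right_cancel₀ hn0 ?_
    rw [one_pow] at hm
    linear_combination ζ * hk - ζ * hm + k * n * hζn
  by_contra hc0
  have hm0 : (m : L) ≠ 0 := by
    intro h
    simp [h, hc0] at hm
  have hζ_rat : ζ = ((k / m : ℚ) : L) := by
    push_cast
    rw [← hmk, mul_div_cancel_left₀ _ hm0]
  have := le_two_of_isPrimitiveRoot_ratCast (hζ_rat ▸ hζ)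
  lia

end RootsOfUnity

section Wronskian

variable {R : Type*} [CommRing R]

lemma wronskian_map {S : Type*} [CommRing S] (φ : R →+* S) (p q : R[X]) :
    wronskian (p.map φ) (q.map φ) = (wronskian p q).map φ := by
  simp only [wronskian, derivative_map, Polynomial.map_sub, Polynomial.map_mul]

lemma X_sub_C_mul_derivative_pow_mul (z : R) (a : ℕ) (g : R[X]) :
    (X - C z) * derivative ((X - C z) ^ a * g) =
      (X - C z) ^ a * ((a : R[X]) * g + (X - C z) * derivative g) := by
  rcases a with _ | a
  · simp
  · simp only [derivative_mul, derivative_X_sub_C_pow, Nat.add_sub_cancel, map_natCast]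
    ring

variable [IsDomain R] {p q f : R[X]} {z : R}

-- Both sides compute the residue of `q' / q = s / f` at `z`, multiplied by `f'(z)`.
lemma eval_eq_rootMultiplicity_mul_eval_derivative {s : R[X]} (hq : q ≠ 0) (hf : f.IsRoot z)
    (h : derivative q * f = q * s) :
    s.eval z = q.rootMultiplicity z * (derivative f).eval z := by
  obtain ⟨g, rfl⟩ := dvd_iff_isRoot.mpr hf
  obtain ⟨q₁, hq₁, hndvd⟩ := q.exists_eq_pow_rootMultiplicity_mul_and_not_dvd hq z
  generalize q.rootMultiplicity z = a at hq₁ ⊢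
  have hderiv := X_sub_C_mul_derivative_pow_mul z a q₁
  rw [← hq₁] at hderiv
  have hs : ((a : R[X]) * q₁ + (X - C z) * derivative q₁) * g = q₁ * s := by
    refine mul_left_cancel₀ (pow_ne_zero a (X_sub_C_ne_zero z)) ?_
    linear_combination h + s * hq₁ - g * hderiv
  have hq₁z : q₁.eval z ≠ 0 := fun h0 ↦ hndvd (dvd_iff_isRoot.mpr h0)
  refine mul_left_cancel₀ hq₁z ?_
  calc q₁.eval z * s.eval z = a * q₁.eval z * g.eval z := by
        simpa using (congrArg (eval z) hs).symm
    _ = q₁.eval z * (a * (derivative ((X - C z) * g)).eval z) := by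
        simp only [derivative_mul, derivative_X_sub_C, eval_add, eval_mul, eval_one, eval_sub,
          eval_X, eval_C, sub_self]
        ring

theorem wronskian_mul_ne_sq [CharZero R] (hpq : IsCoprime p q) (hq : q ≠ 0) (hf : f.IsRoot z)
    (hf' : (derivative f).eval z ≠ 0) : wronskian q p * f ≠ q ^ 2 := by
  intro h
  rw [wronskian] at h
  obtain ⟨s, hs⟩ : q ∣ derivative q * f :=
    hpq.symm.dvd_of_dvd_mul_left ⟨derivative p * f - q, by linear_combination -h⟩
  have hq_eq : q = derivative p * f - p * s :=
    mul_left_cancel₀ hq (by linear_combination -h - p * hs)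
  have hqz : q.eval z = -(p.eval z * (q.rootMultiplicity z * (derivative f).eval z)) := by
    rw [← eval_eq_rootMultiplicity_mul_eval_derivative hq hf hs]
    simpa [hf.eq_zero] using congrArg (eval z) hq_eq
  by_cases hz : q.IsRoot z
  · have hpz : p.eval z ≠ 0 := fun hpz ↦
      not_isCoprime_zero_zero (by simpa [hpz, hz.eq_zero] using hpq.map (evalRingHom z))
    have hmult : (q.rootMultiplicity z : R) ≠ 0 :=
      Nat.cast_ne_zero.mpr ((rootMultiplicity_pos hq).mpr hz).ne'
    exact neg_ne_zero.mpr (mul_ne_zero hpz (mul_ne_zero hmult hf')) (hqz ▸ hz)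
  · exact hz (by simpa [rootMultiplicity_eq_zero hz] using hqz)

theorem exists_int_mul_eval_derivative_of_wronskian_mul_eq (hpq : IsCoprime p q) (hp : p ≠ 0)
    (hq : q ≠ 0) (hf : f.IsRoot z) {c : R} (h : wronskian q p * f = C c * (p * q)) :
    ∃ m : ℤ, c = m * (derivative f).eval z := by
  rw [wronskian] at h
  obtain ⟨r, hr⟩ : p ∣ derivative p * f :=
    hpq.dvd_of_dvd_mul_left ⟨derivative q * f + C c * q, by linear_combination h⟩
  obtain ⟨s, hs⟩ : q ∣ derivative q * f :=
    hpq.symm.dvd_of_dvd_mul_left ⟨derivative p * f - C c * p, by linear_combination -h⟩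
  have hrs : C c = r - s :=
    mul_left_cancel₀ (mul_ne_zero hp hq) (by linear_combination -h + q * hr - p * hs)
  refine ⟨p.rootMultiplicity z - q.rootMultiplicity z, ?_⟩
  calc c = r.eval z - s.eval z := by simpa using congrArg (eval z) hrs
    _ = p.rootMultiplicity z * (derivative f).eval z
        - q.rootMultiplicity z * (derivative f).eval z := by
      rw [eval_eq_rootMultiplicity_mul_eval_derivative hp hf hr,
        eval_eq_rootMultiplicity_mul_eval_derivative hq hf hs]
    _ = ((p.rootMultiplicity z - q.rootMultiplicity z : ℤ) : R) * (derivative f).eval z := by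
      push_cast
      ring

end Wronskian

section SimpleExtension

variable {K F L : Type*} [Field K] [Field F] [Algebra K F] [Field L] [Algebra K L] {t u : F}

lemma exists_isCoprime_eq_aeval_div_aeval (ht : Transcendental K t) (hu : u ∈ K⟮t⟯) :
    ∃ p q : K[X], IsCoprime p q ∧ q ≠ 0 ∧ u = aeval t p / aeval t q := by
  obtain ⟨r, hr⟩ := (RatFunc.algEquivOfTranscendental t ht).surjective ⟨u, hu⟩
  refine ⟨r.num, r.denom, r.isCoprime_num_denom, r.denom_ne_zero, ?_⟩
  rw [← RatFunc.algEquivOfTranscendental_apply t ht, hr]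

lemma derivation_aeval_div_aeval (D : Derivation K F F) (ht : D t = 1) (p q : K[X]) :
    D (aeval t p / aeval t q) = aeval t (wronskian q p) / aeval t q ^ 2 := by
  simp only [D.leibniz_div, D.map_aeval, ht, wronskian, smul_eq_mul, map_sub, map_mul]
  ring

theorem derivation_mul_aeval_ne_one [CharZero L] (D : Derivation K F F) (ht : D t = 1)
    (htr : Transcendental K t) (hu : u ∈ K⟮t⟯) {f : K[X]} {z : L} (hf : aeval z f = 0)
    (hf' : aeval z (derivative f) ≠ 0) : D u * aeval t f ≠ 1 := by
  have hinj := transcendental_iff_injective.mp htr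
  obtain ⟨p, q, hpq, hq, rfl⟩ := exists_isCoprime_eq_aeval_div_aeval htr hu
  intro h
  have hqt : aeval t q ≠ 0 := (map_ne_zero_iff _ hinj).mpr hq
  have hW : wronskian q p * f = q ^ 2 := hinj <| by
    rw [derivation_aeval_div_aeval D ht] at h
    field_simp at h
    simpa only [map_mul, map_pow] using h
  have hWL := congrArg (map (algebraMap K L)) hW
  rw [Polynomial.map_mul, ← wronskian_map, Polynomial.map_pow] at hWL
  exact wronskian_mul_ne_sq (z := z) (hpq.map (mapRingHom (algebraMap K L)))
    (map_ne_zero hq) (by simpa [IsRoot] using hf) (by simpa [derivative_map] using hf') hWL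

theorem exists_int_mul_aeval_derivative_of_derivation_eq (D : Derivation K F F) (ht : D t = 1)
    (htr : Transcendental K t) (hu : u ∈ K⟮t⟯) (hu0 : u ≠ 0) {f : K[X]} {c : K}
    (h : D u * aeval t f = algebraMap K F c * u) {z : L} (hf : aeval z f = 0) :
    ∃ m : ℤ, algebraMap K L c = m * aeval z (derivative f) := by
  have hinj := transcendental_iff_injective.mp htr
  obtain ⟨p, q, hpq, hq, rfl⟩ := exists_isCoprime_eq_aeval_div_aeval htr hu
  have hp : p ≠ 0 := by
    rintro rfl
    simp at hu0
  have hqt : aeval t q ≠ 0 := (map_ne_zero_iff _ hinj).mpr hq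
  have hW : wronskian q p * f = C c * (p * q) := hinj <| by
    rw [derivation_aeval_div_aeval D ht] at h
    field_simp at h
    simp only [map_mul, aeval_C]
    linear_combination h
  have hWL := congrArg (map (algebraMap K L)) hW
  simp only [Polynomial.map_mul, ← wronskian_map, map_C] at hWL
  obtain ⟨m, hm⟩ := exists_int_mul_eval_derivative_of_wronskian_mul_eq (z := z)
    (hpq.map (mapRingHom (algebraMap K L))) (map_ne_zero hp) (map_ne_zero hq)
    (by simpa [IsRoot] using hf) hWL
  exact ⟨m, by simpa [derivative_map] using hm⟩

lemma pow_sub_one_ne_zero_of_transcendental (htr : Transcendental K t) {n : ℕ} (hn : n ≠ 0) :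
    t ^ n - 1 ≠ 0 := by
  have h := (map_ne_zero_iff _ (transcendental_iff_injective.mp htr)).mpr
    (X_pow_sub_C_ne_zero (Nat.pos_of_ne_zero hn) (1 : K))
  simpa using h

theorem derivation_ne_one_div_pow_sub_one [CharZero K] (D : Derivation K F F) (ht : D t = 1)
    (htr : Transcendental K t) (hu : u ∈ K⟮t⟯) {n : ℕ} (hn : n ≠ 0) :
    D u ≠ 1 / (t ^ n - 1) := by
  intro h
  refine derivation_mul_aeval_ne_one D ht htr hu (f := X ^ n - 1) (z := (1 : K))
    (by simp) (by simpa [derivative_X_pow] using hn) ?_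
  simpa using (eq_div_iff (pow_sub_one_ne_zero_of_transcendental htr hn)).mp h

theorem derivation_div_mul_ne_one_div_pow_sub_one [CharZero K] (D : Derivation K F F)
    (ht : D t = 1) (htr : Transcendental K t) (hu : u ∈ K⟮t⟯) (hu0 : u ≠ 0) {c : K} (hc : c ≠ 0)
    {n : ℕ} (hn : 3 ≤ n) : D u / (algebraMap K F c * u) ≠ 1 / (t ^ n - 1) := by
  intro h
  have hcu : algebraMap K F c * u ≠ 0 := mul_ne_zero (by simpa using hc) hu0
  have hDu : D u * aeval t (X ^ n - 1 : K[X]) = algebraMap K F c * u := by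
    simpa using
      (div_eq_div_iff hcu (pow_sub_one_ne_zero_of_transcendental htr (by lia))).mp h
  have : NeZero (n : AlgebraicClosure K) := ⟨by exact_mod_cast (by lia : n ≠ 0)⟩
  obtain ⟨ζ, hζ⟩ := HasEnoughRootsOfUnity.exists_primitiveRoot (AlgebraicClosure K) n
  have hc_zero : algebraMap K (AlgebraicClosure K) c = 0 :=
    eq_zero_of_forall_pow_eq_one_eq_int_mul hζ hn fun z hz ↦ by
      simpa [derivative_X_pow] using
        exists_int_mul_aeval_derivative_of_derivation_eq D ht htr hu hu0 hDu
          (z := z) (by simp [hz])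
  exact hc (by simpa using hc_zero)

end SimpleExtension

section Subfield

variable {F : Type*} [Field F] (C : Subfield F)

/-- A derivation vanishing on the subfield `C`, regarded as a `C`-linear derivation. -/
def derivationOverConstants (D : Derivation ℤ F F) (hD : ∀ c ∈ C, D c = 0) :
    Derivation C F F :=
  Derivation.mk' { D with
    map_smul' c x := by simp [Subfield.smul_def, D.leibniz, hD c c.2] } D.leibniz

lemma adjoin_eq_top_of_closure_eq_top {S : Set F}
    (h : Subfield.closure ((C : Set F) ∪ S) = ⊤) : IntermediateField.adjoin C S = ⊤ := by
  rw [← toSubfield_inj, adjoin_toSubfield, IntermediateField.top_toSubfield, ← h]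
  congr
  exact Subtype.range_coe

end Subfield

theorem stmt17_general {F : Type u} [Field F] [CharZero F] (D : Derivation ℤ F F)
    (C : Subfield F) (t : F) (htr : Transcendental ↥C t)
    (hgen : Subfield.closure (↑C ∪ {t}) = (⊤ : Subfield F))
    (hCconst : ∀ c ∈ C, D c = 0) (ht : D t = 1)
    (n : ℕ) (hn : 3 ≤ n) :
    (¬ ∃ u : F, D u = 1 / (t ^ n - 1)) ∧
    (¬ ∃ (u c : F), u ≠ 0 ∧ c ∈ C ∧ c ≠ 0 ∧ D u / (c * u) = 1 / (t ^ n - 1)) := by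
  have hmem (u : F) : u ∈ C⟮t⟯ := adjoin_eq_top_of_closure_eq_top C hgen ▸ mem_top
  let D' := derivationOverConstants C D hCconst
  constructor
  · rintro ⟨u, hu⟩
    exact derivation_ne_one_div_pow_sub_one D' ht htr (hmem u) (by lia) hu
  · rintro ⟨u, c, hu0, hcC, hc0, hu⟩
    lift c to C using hcC
    exact derivation_div_mul_ne_one_div_pow_sub_one D' ht htr (hmem u) hu0
      (by simpa using hc0) hn hu

/-- Let `C(t)` be the rational function field over an algebraically closed
field `C` of characteristic zero, with the derivation `D` vanishing on `C` and `D t = 1`,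
and let `n ≥ 3`. Then there is no `u ∈ C(t)` with `D u = 1/(tⁿ − 1)`, and there are no
nonzero `u ∈ C(t)` and nonzero `c ∈ C` with `D u / (c·u) = 1/(tⁿ − 1)`. -/
theorem stmt17 {F : Type u} [Field F] [CharZero F] (D : Derivation ℤ F F)
    (C : Subfield F) (hCalg : IsAlgClosed ↥C)
    (t : F) (htr : Transcendental ↥C t)
    (hgen : Subfield.closure (↑C ∪ {t}) = (⊤ : Subfield F))
    (hCconst : ∀ c ∈ C, D c = 0) (ht : D t = 1)
    (n : ℕ) (hn : 3 ≤ n) :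
    (¬ ∃ u : F, D u = 1 / (t ^ n - 1)) ∧
    (¬ ∃ (u c : F), u ≠ 0 ∧ c ∈ C ∧ c ≠ 0 ∧ D u / (c * u) = 1 / (t ^ n - 1)) :=
  stmt17_general D C t htr hgen hCconst ht n hn
end
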